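/- arXiv:0708.3928 — 5 statements merged into one kernel-verified Lean document; each statement's English description precedes it below -/
import Mathlib

section
/- Let A be an affine Poisson algebra and let M be a simple Poisson A-module. Then ann_A(M) is a prime ideal of A. -/
/-- A Poisson bracket on a commutative ℂ-algebra `A`: a ℂ-bilinear product making `A`
a Lie algebra and such that each Hamiltonian `ham a = br a ·` is a ℂ-derivation of `A`. -/
structure PoissonStruct (A : Type*) [CommRing A] [Algebra ℂ A] where
  br : A → A → A
  add_left : ∀ a b c : A, br (a + b) c = br a c + br b c
  smul_left : ∀ (r : ℂ) (a b : A), br (r • a) b = r • br a b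
  add_right : ∀ a b c : A, br a (b + c) = br a b + br a c
  smul_right : ∀ (r : ℂ) (a b : A), br a (r • b) = r • br a b
  antisymm : ∀ a b : A, br a b = - br b a
  jacobi : ∀ a b c : A, br a (br b c) = br (br a b) c + br b (br a c)
  leibniz : ∀ a b c : A, br a (b * c) = br a b * c + b * br a c

/-- An ideal `I` of a Poisson algebra is a Poisson ideal if `{a, i} ∈ I`
for all `a ∈ A` and `i ∈ I`. -/
def PoissonStruct.IsPoissonIdeal {A : Type*} [CommRing A] [Algebra ℂ A]
    (P : PoissonStruct A) (I : Ideal A) : Prop :=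
  ∀ a : A, ∀ i ∈ I, P.br a i ∈ I

/-- A Poisson module structure on an `A`-module `M`, in the sense of Farkas and Oh. -/
structure PoissonModuleStruct {A : Type*} [CommRing A] [Algebra ℂ A]
    (P : PoissonStruct A) (M : Type*) [AddCommGroup M] [Module ℂ M] [Module A M]
    [IsScalarTower ℂ A M] where
  pbr : A → M → M
  add_left : ∀ (a b : A) (m : M), pbr (a + b) m = pbr a m + pbr b m
  smul_left : ∀ (r : ℂ) (a : A) (m : M), pbr (r • a) m = r • pbr a m
  add_right : ∀ (a : A) (m n : M), pbr a (m + n) = pbr a m + pbr a n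
  smul_right : ∀ (r : ℂ) (a : A) (m : M), pbr a (r • m) = r • pbr a m
  lie_compat : ∀ (a b : A) (m : M), pbr (P.br a b) m = pbr a (pbr b m) - pbr b (pbr a m)
  deriv_act : ∀ (a b : A) (m : M), pbr a (b • m) = P.br a b • m + b • pbr a m
  mul_act : ∀ (a b : A) (m : M), pbr (a * b) m = a • pbr b m + b • pbr a m

namespace PoissonModuleStruct

variable {A : Type*} [CommRing A] [Algebra ℂ A] {P : PoissonStruct A}
  {M : Type*} [AddCommGroup M] [Module ℂ M] [Module A M] [IsScalarTower ℂ A M]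

/-- A Poisson submodule of a Poisson module. -/
def IsPoissonSubmodule (Q : PoissonModuleStruct P M) (N : Submodule A M) : Prop :=
  ∀ a : A, ∀ n ∈ N, Q.pbr a n ∈ N

/-- A simple Poisson module: nonzero, and its only Poisson submodules are `⊥` and `⊤`. -/
def IsSimple (Q : PoissonModuleStruct P M) : Prop :=
  (∃ m : M, m ≠ 0) ∧ ∀ N : Submodule A M, Q.IsPoissonSubmodule N → N = ⊥ ∨ N = ⊤

end PoissonModuleStruct

/-!
Let `J` be the annihilator of the simple Poisson module `M`, and `p` a minimal prime over `J`.
In characteristic zero every derivation preserving `J` preserves `p`, so `p`, like `J`, is a Poisson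
ideal. As `A` is Noetherian, `p = (J : b)` for some `b ∉ J`, so `p` kills the nonzero vector `b • m`
for some `m : M`. The vectors killed by a Poisson ideal form a Poisson submodule, which by
simplicity is all of `M`: hence `p ≤ J`, and `J = p` is prime.
-/

section MinimalPrimes

theorem exists_mul_pow_mem_of_mem_minimalPrimes {A : Type*} [CommSemiring A] {I p : Ideal A}
    (hp : p ∈ I.minimalPrimes) {x : A} (hx : x ∈ p) : ∃ s ∉ p, ∃ n : ℕ, s * x ^ n ∈ I := by
  have := hp.isPrime
  by_contra! hI
  have hdisj : Disjoint (I : Set A) (p.primeCompl ⊔ Submonoid.powers x : Submonoid A) := by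
    rw [Set.disjoint_right]
    intro y hy
    obtain ⟨s, hs, _, ⟨n, rfl⟩, rfl⟩ := Submonoid.mem_sup.mp hy
    exact hI s hs n
  obtain ⟨q, hq, hIq, hqdisj⟩ := Ideal.exists_le_prime_disjoint I _ hdisj
  have hqp : q ≤ p := fun y hyq => by_contra fun hyp =>
    Set.disjoint_left.mp hqdisj hyq (Submonoid.mem_sup_left hyp)
  have hxq : x ∈ q := hp.2 ⟨hq, hIq⟩ hqp hx
  exact Set.disjoint_left.mp hqdisj hxq (Submonoid.mem_sup_right (Submonoid.mem_powers x))

theorem exists_notMem_forall_mul_mem_of_mem_minimalPrimes {A : Type*} [CommSemiring A]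
    [IsNoetherianRing A] {I p : Ideal A} (hp : p ∈ I.minimalPrimes) :
    ∃ b ∉ I, ∀ a ∈ p, a * b ∈ I := by
  have hI : I.colon {1} = I := by
    ext a
    rw [Submodule.mem_colon_singleton, smul_eq_mul, mul_one]
  obtain ⟨b, hpb⟩ := Submodule.exists_eq_colon_of_mem_minimalPrimes (hI.symm ▸ hp)
  refine ⟨b, fun hb => hp.isPrime.ne_top ?_, fun a ha => ?_⟩
  · rwa [hpb, Submodule.colon_eq_top_iff_subset, Set.singleton_subset_iff]
  · rwa [hpb, Submodule.mem_colon_singleton] at ha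

variable {K A : Type*} [Field K] [CharZero K] [CommRing A] [Algebra K A]

theorem sq_mul_derivation_mul_pow_mem {I : Ideal A} (D : Derivation K A A) (hD : ∀ x ∈ I, D x ∈ I)
    {s x : A} {n : ℕ} (h : s * x ^ (n + 1) ∈ I) : s ^ 2 * D x * x ^ n ∈ I := by
  have hn : ((n + 1 : ℕ) : K) ≠ 0 := Nat.cast_ne_zero.mpr n.succ_ne_zero
  have hderiv : s * D (s * x ^ (n + 1)) - D s * (s * x ^ (n + 1)) =
      ((n + 1 : ℕ) : K) • (s ^ 2 * D x * x ^ n) := by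
    simp only [Derivation.leibniz, Derivation.leibniz_pow, Nat.add_sub_cancel, smul_eq_mul,
      nsmul_eq_mul, Nat.cast_smul_eq_nsmul]
    ring
  have hmem : ((n + 1 : ℕ) : K) • (s ^ 2 * D x * x ^ n) ∈ I :=
    hderiv ▸ I.sub_mem (I.mul_mem_left _ (hD _ h)) (I.mul_mem_left _ h)
  simpa only [inv_smul_smul₀ hn] using Submodule.smul_of_tower_mem I ((n + 1 : ℕ) : K)⁻¹ hmem

theorem derivation_apply_mem_of_mem_minimalPrimes {I p : Ideal A} (D : Derivation K A A)
    (hD : ∀ x ∈ I, D x ∈ I) (hp : p ∈ I.minimalPrimes) {x : A} (hx : x ∈ p) : D x ∈ p := by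
  classical
  -- Choose `n` least with `s * x ^ n ∈ I` for some `s ∉ p`. Differentiating trades one factor `x`
  -- for `D x` up to squaring `s`, so `D x ∉ p` would make `n - 1` work as well.
  have hprime := hp.isPrime
  have hex : ∃ n : ℕ, ∃ s ∉ p, s * x ^ n ∈ I := by
    obtain ⟨s, hs, n, hn⟩ := exists_mul_pow_mem_of_mem_minimalPrimes hp hx
    exact ⟨n, s, hs, hn⟩
  obtain ⟨s, hs, hmem⟩ := Nat.find_spec hex
  by_contra hDx
  cases hn : Nat.find hex with
  | zero => exact hs (hp.le (by simpa [hn] using hmem))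
  | succ n =>
    rw [hn] at hmem
    have hsDx : s ^ 2 * D x ∉ p := hprime.mul_notMem (mt (hprime.mem_of_pow_mem 2) hs) hDx
    exact Nat.find_min hex (hn ▸ n.lt_succ_self)
      ⟨_, hsDx, sq_mul_derivation_mul_pow_mem D hD hmem⟩

end MinimalPrimes

namespace PoissonStruct

variable {A : Type*} [CommRing A] [Algebra ℂ A] (P : PoissonStruct A)

/-- The Hamiltonian derivation `ham(a) = {a, -}`, bundled as a `ℂ`-derivation of `A`. -/
def ham (a : A) : Derivation ℂ A A :=
  Derivation.mk'
    { toFun := P.br a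
      map_add' := P.add_right a
      map_smul' := fun r b => P.smul_right r a b }
    fun b c => by
      simp only [LinearMap.coe_mk, AddHom.coe_mk, P.leibniz, smul_eq_mul]
      ring

variable {P}

theorem IsPoissonIdeal.of_mem_minimalPrimes {I p : Ideal A} (hI : P.IsPoissonIdeal I)
    (hp : p ∈ I.minimalPrimes) : P.IsPoissonIdeal p :=
  fun a _ => derivation_apply_mem_of_mem_minimalPrimes (P.ham a) (hI a) hp

end PoissonStruct

namespace PoissonModuleStruct

variable {A : Type*} [CommRing A] [Algebra ℂ A] {P : PoissonStruct A}
  {M : Type*} [AddCommGroup M] [Module ℂ M] [Module A M] [IsScalarTower ℂ A M]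
  {Q : PoissonModuleStruct P M}

theorem pbr_zero (Q : PoissonModuleStruct P M) (a : A) : Q.pbr a 0 = 0 := by
  simpa only [zero_smul] using Q.smul_right 0 a 0

theorem br_smul_eq_sub (Q : PoissonModuleStruct P M) (a b : A) (m : M) :
    P.br a b • m = Q.pbr a (b • m) - b • Q.pbr a m :=
  eq_sub_of_add_eq (Q.deriv_act a b m).symm

theorem isPoissonIdeal_annihilator (Q : PoissonModuleStruct P M) :
    P.IsPoissonIdeal (Module.annihilator A M) := by
  intro a b hb
  rw [Module.mem_annihilator] at hb ⊢
  intro m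
  rw [Q.br_smul_eq_sub, hb, hb, Q.pbr_zero, sub_zero]

theorem isPoissonSubmodule_torsionBySet (Q : PoissonModuleStruct P M) {I : Ideal A}
    (hI : P.IsPoissonIdeal I) : Q.IsPoissonSubmodule (Submodule.torsionBySet A M I) := by
  intro a m hm
  rw [Submodule.mem_torsionBySet_iff] at hm ⊢
  rintro ⟨b, hb⟩
  have hbm : b • m = 0 := hm ⟨b, hb⟩
  have hbr : P.br a b • m = 0 := hm ⟨_, hI a b hb⟩
  rw [Q.br_smul_eq_sub, hbm, Q.pbr_zero, zero_sub, neg_eq_zero] at hbr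
  exact hbr

theorem IsSimple.le_annihilator_of_smul_eq_zero (hQ : Q.IsSimple) {I : Ideal A}
    (hI : P.IsPoissonIdeal I) {m : M} (hm : m ≠ 0) (hIm : ∀ a ∈ I, a • m = 0) :
    I ≤ Module.annihilator A M := by
  have hmem : m ∈ Submodule.torsionBySet A M I :=
    (Submodule.mem_torsionBySet_iff _ _).mpr fun a => hIm a a.2
  have htop : Submodule.torsionBySet A M I = ⊤ :=
    (hQ.2 _ (Q.isPoissonSubmodule_torsionBySet hI)).resolve_left
      ((Submodule.ne_bot_iff _).mpr ⟨m, hmem, hm⟩)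
  intro a ha
  rw [Module.mem_annihilator]
  intro x
  have hx : x ∈ Submodule.torsionBySet A M I := htop ▸ Submodule.mem_top
  exact (Submodule.mem_torsionBySet_iff _ _).mp hx ⟨a, ha⟩

theorem IsSimple.annihilator_ne_top (hQ : Q.IsSimple) : Module.annihilator A M ≠ ⊤ := by
  obtain ⟨m, hm⟩ := hQ.1
  rw [Ideal.ne_top_iff_one, Module.mem_annihilator]
  exact fun h => hm (by simpa only [one_smul] using h m)

end PoissonModuleStruct

theorem stmt1_general {A : Type*} [CommRing A] [Algebra ℂ A] [IsNoetherianRing A]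
    (P : PoissonStruct A)
    {M : Type*} [AddCommGroup M] [Module ℂ M] [Module A M] [IsScalarTower ℂ A M]
    (Q : PoissonModuleStruct P M) (hsimple : Q.IsSimple) :
    (Module.annihilator A M).IsPrime := by
  obtain ⟨p, hp⟩ := Ideal.nonempty_minimalPrimes hsimple.annihilator_ne_top
  have hPoisson : P.IsPoissonIdeal p := Q.isPoissonIdeal_annihilator.of_mem_minimalPrimes hp
  obtain ⟨b, hb, hpb⟩ := exists_notMem_forall_mul_mem_of_mem_minimalPrimes hp
  obtain ⟨m, hm⟩ : ∃ m : M, b • m ≠ 0 := by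
    simpa only [Module.mem_annihilator, not_forall] using hb
  have hkill (a : A) (ha : a ∈ p) : a • b • m = 0 := by
    rw [smul_smul]
    exact Module.mem_annihilator.mp (hpb a ha) m
  have hle : p ≤ Module.annihilator A M :=
    hsimple.le_annihilator_of_smul_eq_zero hPoisson hm hkill
  rw [hp.le.antisymm hle]
  exact hp.isPrime

/-- Let `A` be an affine Poisson algebra and `M` a simple Poisson
`A`-module. Then `ann_A(M)` is a prime ideal of `A`. -/
theorem stmt1 {A : Type*} [CommRing A] [Algebra ℂ A] [Algebra.FiniteType ℂ A]
    (P : PoissonStruct A)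
    {M : Type*} [AddCommGroup M] [Module ℂ M] [Module A M] [IsScalarTower ℂ A M]
    (Q : PoissonModuleStruct P M) (hsimple : Q.IsSimple) :
    (Module.annihilator A M).IsPrime := by
  have : IsNoetherianRing A := Algebra.FiniteType.isNoetherianRing ℂ A
  exact stmt1_general P Q hsimple
end

section
/- Let A be an affine Poisson algebra and let M be a simple Poisson A-module that is finite-dimensional as a ℂ-vector space. Then ann_A(M) is a maximal ideal of A. -/
/-!
The bracket operators on a Poisson module are derivations `D` along derivations `δ` of `A`, and
the result holds for every family of such operators. If `s • m = 0` then `s ^ 2 • D m = 0`, so the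
elements killed by a power of `a ∈ A` form a stable submodule; by simplicity, `a` acts injectively
or nilpotently. If `a` acts nilpotently then so does `δ a`: otherwise `δ a` acts injectively, and
applying `D` to `a ^ (n + 1) • m = 0` gives `(n + 1) • δ a • a ^ n • m = 0`, so in characteristic
zero the exponent can be lowered to `0`. Hence the ideal `I` of elements acting nilpotently is
`δ`-stable, `I • M` is a stable submodule, and it is proper by Nakayama's lemma; so `I • M = 0`.
Every element outside the annihilator therefore acts injectively, and bijectively as `M` has finite
length.
-/

section DifferentialModules

variable {A M ι : Type*} [CommRing A] [AddCommGroup M] [Module A M]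

/-- `D` is a derivation of the `A`-module `M` along `δ`. The map `δ` is arbitrary: the rule below
determines it modulo `ann_A(M)`, where it is a derivation. -/
def IsDerivationAlong (δ : A → A) (D : M →+ M) : Prop :=
  ∀ (a : A) (m : M), D (a • m) = δ a • m + a • D m

variable (A) in
/-- `M` is a simple differential module for the family of operators `D`: it is nonzero, and no
`A`-submodule other than `⊥` and `⊤` is stable under every `D i`. -/
structure IsDifferentiallySimple (D : ι → M →+ M) : Prop where
  nontrivial : Nontrivial M
  eq_bot_or_eq_top (N : Submodule A M) : (∀ i, Set.MapsTo (D i) N N) → N = ⊥ ∨ N = ⊤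

namespace IsDerivationAlong

variable {δ : A → A} {D : M →+ M}

theorem mapsTo_torsion' (hD : IsDerivationAlong δ D) (S : Submonoid A) :
    Set.MapsTo D (Submodule.torsion' A M S) (Submodule.torsion' A M S) := by
  rintro m ⟨s, hsm : (s : A) • m = 0⟩
  have hD_sm : δ s • m + (s : A) • D m = 0 := by rw [← hD, hsm, map_zero]
  refine ⟨s * s, ?_⟩
  calc (s * s : A) • D m
      = (s : A) • (δ s • m + (s : A) • D m) - δ s • (s : A) • m := by module
    _ = 0 := by rw [hD_sm, hsm, smul_zero, smul_zero, sub_zero]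

theorem mapsTo_ideal_smul (hD : IsDerivationAlong δ D) {I : Ideal A} (hI : Set.MapsTo δ I I)
    {N : Submodule A M} (hN : Set.MapsTo D N N) :
    Set.MapsTo D (I • N : Submodule A M) (I • N : Submodule A M) := by
  intro m hm
  induction hm using Submodule.smul_induction_on' with
  | smul a ha m hm =>
    rw [hD]
    exact add_mem (Submodule.smul_mem_smul (hI ha) hm) (Submodule.smul_mem_smul ha (hN hm))
  | add m _ m' _ hDm hDm' =>
    rw [map_add]
    exact add_mem hDm hDm'

theorem apply_pow_succ_smul (hD : IsDerivationAlong δ D) (a : A) (n : ℕ) (m : M) :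
    D (a ^ (n + 1) • m) = (n + 1) • δ a • a ^ n • m + a ^ (n + 1) • D m := by
  induction n with
  | zero => simp only [zero_add, pow_one, pow_zero, one_smul, hD a m]
  | succ n ih =>
    rw [pow_succ' a (n + 1), mul_smul, hD, ih]
    module

theorem pow_mem_annihilator_of_pow_succ_mem [IsAddTorsionFree M] (hD : IsDerivationAlong δ D)
    {a : A} (ha : IsSMulRegular M (δ a)) {n : ℕ}
    (hn : a ^ (n + 1) ∈ Module.annihilator A M) : a ^ n ∈ Module.annihilator A M := by
  rw [Module.mem_annihilator] at hn ⊢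
  intro m
  have h : (n + 1) • δ a • a ^ n • m = 0 := by
    simpa only [hn, map_zero, add_zero] using (hD.apply_pow_succ_smul a n m).symm
  exact ha.right_eq_zero_of_smul ((nsmul_eq_zero_iff_right n.succ_ne_zero).1 h)

theorem notMem_radical_annihilator [IsAddTorsionFree M] [Nontrivial M]
    (hD : IsDerivationAlong δ D) {a : A} (ha : IsSMulRegular M (δ a)) :
    a ∉ (Module.annihilator A M).radical := by
  rintro ⟨n, hn⟩
  induction n with
  | zero =>
    rw [pow_zero, ← Ideal.eq_top_iff_one, Module.annihilator_eq_top_iff] at hn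
    exact not_subsingleton M hn
  | succ n ih => exact ih (hD.pow_mem_annihilator_of_pow_succ_mem ha hn)

end IsDerivationAlong

theorem mem_radical_annihilator_of_torsion'_powers_eq_top [Module.Finite A M] {a : A}
    (ha : Submodule.torsion' A M (Submonoid.powers a) = ⊤) :
    a ∈ (Module.annihilator A M).radical := by
  have hnil : IsNilpotent (Algebra.lsmul A A M a) := by
    refine Module.End.isNilpotent_iff_of_finite.2 fun m => ?_
    obtain ⟨⟨_, n, rfl⟩, hn⟩ := ha.ge (Submodule.mem_top (x := m))
    exact ⟨n, by rw [← map_pow]; exact hn⟩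
  obtain ⟨n, hn⟩ := hnil
  rw [← map_pow] at hn
  exact ⟨n, Module.mem_annihilator.2 (LinearMap.congr_fun hn)⟩

theorem isSMulRegular_of_torsion'_powers_eq_bot {a : A}
    (ha : Submodule.torsion' A M (Submonoid.powers a) = ⊥) : IsSMulRegular M a :=
  IsSMulRegular.of_right_eq_zero_of_smul fun _ hm =>
    ha.le ⟨⟨a, Submonoid.mem_powers a⟩, hm⟩

theorem ideal_eq_top_of_smul_top_eq_top [Module.Finite A M] {J : Ideal A}
    (hJ : Module.annihilator A M ≤ J) (h : J • (⊤ : Submodule A M) = ⊤) : J = ⊤ := by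
  obtain ⟨r, hr_sub_one, hr⟩ :=
    Submodule.exists_sub_one_mem_and_smul_eq_zero_of_fg_of_le_smul J ⊤ Module.Finite.fg_top h.ge
  have hrJ : r ∈ J := hJ (Module.mem_annihilator.2 fun _ => hr _ Submodule.mem_top)
  rw [Ideal.eq_top_iff_one]
  simpa only [sub_sub_cancel] using sub_mem hrJ hr_sub_one

theorem annihilator_isMaximal_of_surjective_smul [Nontrivial M] [Module.Finite A M]
    (h : ∀ a ∉ Module.annihilator A M, Function.Surjective fun m : M => a • m) :
    (Module.annihilator A M).IsMaximal := by
  refine Ideal.isMaximal_def.2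
    ⟨fun htop => not_subsingleton M (Module.annihilator_eq_top_iff.1 htop), fun J hJ => ?_⟩
  obtain ⟨a, haJ, ha⟩ := SetLike.exists_of_lt hJ
  refine ideal_eq_top_of_smul_top_eq_top hJ.le (Submodule.eq_top_iff'.2 fun m => ?_)
  obtain ⟨n, rfl⟩ := h a ha m
  exact Submodule.smul_mem_smul haJ Submodule.mem_top

namespace IsDifferentiallySimple

variable {δ : ι → A → A} {D : ι → M →+ M}

theorem isSMulRegular_or_mem_radical_annihilator [Module.Finite A M]
    (hM : IsDifferentiallySimple A D) (hD : ∀ i, IsDerivationAlong (δ i) (D i)) (a : A) :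
    IsSMulRegular M a ∨ a ∈ (Module.annihilator A M).radical :=
  (hM.eq_bot_or_eq_top _ fun i => (hD i).mapsTo_torsion' (Submonoid.powers a)).imp
    isSMulRegular_of_torsion'_powers_eq_bot mem_radical_annihilator_of_torsion'_powers_eq_top

theorem mapsTo_radical_annihilator [IsAddTorsionFree M] [Module.Finite A M]
    (hM : IsDifferentiallySimple A D) (hD : ∀ i, IsDerivationAlong (δ i) (D i)) (i : ι) :
    Set.MapsTo (δ i) (Module.annihilator A M).radical (Module.annihilator A M).radical := by
  have := hM.nontrivial
  exact fun a ha => (hM.isSMulRegular_or_mem_radical_annihilator hD (δ i a)).resolve_left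
    fun hreg => (hD i).notMem_radical_annihilator hreg ha

theorem isRadical_annihilator [IsAddTorsionFree M] [Module.Finite A M]
    (hM : IsDifferentiallySimple A D) (hD : ∀ i, IsDerivationAlong (δ i) (D i)) :
    (Module.annihilator A M).IsRadical := by
  have := hM.nontrivial
  set I := (Module.annihilator A M).radical
  have hI_ne_top : (I • ⊤ : Submodule A M) ≠ ⊤ :=
    (Submodule.top_ne_ideal_smul_of_le_jacobson_annihilator Ideal.radical_le_jacobson).symm
  have hI_eq_bot : (I • ⊤ : Submodule A M) = ⊥ :=
    (hM.eq_bot_or_eq_top _ fun i => (hD i).mapsTo_ideal_smul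
      (hM.mapsTo_radical_annihilator hD i) fun _ _ => Submodule.mem_top).resolve_right hI_ne_top
  intro a ha
  rw [Module.mem_annihilator]
  exact fun m => hI_eq_bot.le (Submodule.smul_mem_smul ha Submodule.mem_top)

end IsDifferentiallySimple

end DifferentialModules

namespace PoissonModuleStruct

variable {A : Type*} [CommRing A] [Algebra ℂ A] {P : PoissonStruct A}
  {M : Type*} [AddCommGroup M] [Module ℂ M] [Module A M] [IsScalarTower ℂ A M]

/-- The Hamiltonian operator `{a, -}` of a Poisson module. -/
def ham (Q : PoissonModuleStruct P M) (a : A) : M →+ M :=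
  AddMonoidHom.mk' (Q.pbr a) (Q.add_right a)

theorem isDerivationAlong_ham (Q : PoissonModuleStruct P M) (a : A) :
    IsDerivationAlong (P.br a) (Q.ham a) :=
  Q.deriv_act a

theorem IsSimple.isDifferentiallySimple {Q : PoissonModuleStruct P M} (hQ : Q.IsSimple) :
    IsDifferentiallySimple A Q.ham where
  nontrivial := nontrivial_iff_exists_ne 0 |>.2 hQ.1
  eq_bot_or_eq_top := hQ.2

end PoissonModuleStruct

theorem stmt2_general {A M ι : Type*} [CommRing A] [AddCommGroup M] [Module A M]
    [IsAddTorsionFree M] [IsArtinian A M] [Module.Finite A M] {δ : ι → A → A} {D : ι → M →+ M}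
    (hD : ∀ i, IsDerivationAlong (δ i) (D i)) (hM : IsDifferentiallySimple A D) :
    (Module.annihilator A M).IsMaximal := by
  have := hM.nontrivial
  refine annihilator_isMaximal_of_surjective_smul fun a ha => ?_
  have hreg : IsSMulRegular M a :=
    (hM.isSMulRegular_or_mem_radical_annihilator hD a).resolve_right
      fun h => ha (hM.isRadical_annihilator hD h)
  exact IsArtinian.surjective_of_injective_endomorphism (LinearMap.lsmul A M a) hreg

/-- Let `A` be an affine Poisson algebra and `M` a simple Poisson
`A`-module that is finite-dimensional over ℂ. Then `ann_A(M)` is a maximal ideal of `A`. -/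
theorem stmt2 {A : Type*} [CommRing A] [Algebra ℂ A] [Algebra.FiniteType ℂ A]
    (P : PoissonStruct A)
    {M : Type*} [AddCommGroup M] [Module ℂ M] [Module A M] [IsScalarTower ℂ A M]
    [FiniteDimensional ℂ M]
    (Q : PoissonModuleStruct P M) (hsimple : Q.IsSimple) :
    (Module.annihilator A M).IsMaximal := by
  have : IsArtinian A M := isArtinian_of_tower ℂ inferInstance
  have : Module.Finite A M := .of_restrictScalars_finite ℂ A M
  have : IsAddTorsionFree M := .of_isTorsionFree ℂ M
  exact stmt2_general Q.isDerivationAlong_ham hsimple.isDifferentiallySimple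
end

section
/- Let U be the ℂ-algebra generated by x, y, z and a central generator t subject to the relations xy = yx + 2tz + (1/2)t², yz = zy − ty, zx = xz − tx. Then the element g := z² − (1/2)tz − yx is central in U. Moreover, in the quotient U₁ := U/(t−1)U, the element p := z² − (1/2)z − yx is central. -/
noncomputable section

/-- Generators of the free algebra on `x, y, z, t` (indices `0, 1, 2, 3`). -/
def F4 (i : Fin 4) : FreeAlgebra ℂ (Fin 4) := FreeAlgebra.ι ℂ i

/-- The defining relations of `U`: `t` is central and
`xy = yx + 2tz + (1/2)t²`, `yz = zy − ty`, `zx = xz − tx`. -/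
inductive URel : FreeAlgebra ℂ (Fin 4) → FreeAlgebra ℂ (Fin 4) → Prop
  | central_x : URel (F4 3 * F4 0) (F4 0 * F4 3)
  | central_y : URel (F4 3 * F4 1) (F4 1 * F4 3)
  | central_z : URel (F4 3 * F4 2) (F4 2 * F4 3)
  | rel_xy : URel (F4 0 * F4 1)
      (F4 1 * F4 0 + 2 * (F4 3 * F4 2) + (1/2 : ℂ) • (F4 3 * F4 3))
  | rel_yz : URel (F4 1 * F4 2) (F4 2 * F4 1 - F4 3 * F4 1)
  | rel_zx : URel (F4 2 * F4 0) (F4 0 * F4 2 - F4 3 * F4 0)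

/-- The algebra `U`. -/
abbrev U : Type := RingQuot URel

def Ux : U := RingQuot.mkAlgHom ℂ URel (F4 0)
def Uy : U := RingQuot.mkAlgHom ℂ URel (F4 1)
def Uz : U := RingQuot.mkAlgHom ℂ URel (F4 2)
def Ut : U := RingQuot.mkAlgHom ℂ URel (F4 3)

/-- The element `g = z² − (1/2)tz − yx` of `U`. -/
def Ug : U := Uz * Uz - (1/2 : ℂ) • (Ut * Uz) - Uy * Ux

/-- The relation `t = 1` defining `U₁ = U/(t−1)U`. -/
inductive U1Rel : U → U → Prop
  | t_eq_one : U1Rel Ut 1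

/-- The deformation `U₁ = U/(t−1)U`. -/
abbrev U1 : Type := RingQuot U1Rel

/-- The canonical projection `U → U₁`. -/
def Upi : U →ₐ[ℂ] U1 := RingQuot.mkAlgHom ℂ U1Rel

/-- The element `p = z² − (1/2)z − yx` of `U₁`. -/
def U1p : U1 := Upi Uz * Upi Uz - (1/2 : ℂ) • Upi Uz - Upi Uy * Upi Ux

/-!
Put `Q(c) = c² - (1/2)tc`. The relations say `x z = (z + t) x` and `y (z + t) = z y`, so `x` and `y`
shift the argument of `Q` by `± t`, and they say `x y - y x = Q(z + t) - Q(z)`. Hence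
`y x = Q(z) - g` and `x y = Q(z + t) - g`, and comparing `x (y x)` with `(x y) x`, and likewise
`y (x y)` with `(y x) y`, shows that `g` commutes with `x` and `y`. It commutes with `z` because the
two shifts cancel in `y x`.
-/

theorem commute_sub_mul_of_semiconjBy {R : Type*} [NonUnitalRing R] {x y a b : R}
    (hx : SemiconjBy x a b) (h : a - y * x = b - x * y) : Commute (a - y * x) x :=
  calc (a - y * x) * x = b * x - x * y * x := by rw [h, sub_mul]
    _ = x * (a - y * x) := by rw [mul_sub, hx.eq, mul_assoc]

theorem commute_of_commute_map_ι {R A X : Type*} [CommSemiring R] [Semiring A] [Algebra R A]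
    {f : FreeAlgebra R X →ₐ[R] A} (hf : Function.Surjective f) {c : A}
    (hc : ∀ i, Commute c (f (FreeAlgebra.ι R i))) (a : A) : Commute c a := by
  have ha : a ∈ Algebra.adjoin R (f '' Set.range (FreeAlgebra.ι R)) := by
    rw [← AlgHom.map_adjoin, FreeAlgebra.adjoin_range_ι, Algebra.map_top]
    exact hf a
  refine Algebra.commute_of_mem_adjoin_of_forall_mem_commute ha ?_
  rintro _ ⟨_, ⟨i, rfl⟩, rfl⟩
  exact hc i

section ShiftQuad

variable {K A : Type*} [CommRing K] [Ring A] [Algebra K A] {t c d w : A}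

/-- The quadratic polynomial `Q(c) = c² - κtc`. With `κ = 1/2` it expresses the Casimir element
as `g = Q(z) - yx`. -/
def shiftQuad (κ : K) (t c : A) : A := c * c - κ • (t * c)

theorem semiconjBy_shiftQuad (κ : K) (ht : Commute w t) (h : SemiconjBy w c d) :
    SemiconjBy w (shiftQuad κ t c) (shiftQuad κ t d) :=
  (h.mul_right h).sub_right ((ht.semiconjBy.mul_right h).smul_right κ)

theorem commute_shiftQuad (κ : K) (ht : Commute w t) (hc : Commute w c) :
    Commute w (shiftQuad κ t c) :=
  semiconjBy_shiftQuad κ ht hc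

theorem shiftQuad_add_self (κ : K) (hc : Commute c t) :
    shiftQuad κ t (c + t) = shiftQuad κ t c + (2 * (t * c) + (1 - κ) • (t * t)) := by
  simp only [shiftQuad, mul_add, add_mul, hc.eq, two_mul]
  module

end ShiftQuad

theorem commute_Ux_Ut : Commute Ux Ut := by
  simpa only [map_mul] using! (RingQuot.mkAlgHom_rel ℂ URel.central_x).symm

theorem commute_Uy_Ut : Commute Uy Ut := by
  simpa only [map_mul] using! (RingQuot.mkAlgHom_rel ℂ URel.central_y).symm

theorem commute_Uz_Ut : Commute Uz Ut := by
  simpa only [map_mul] using! (RingQuot.mkAlgHom_rel ℂ URel.central_z).symm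

theorem Ux_mul_Uy : Ux * Uy = Uy * Ux + 2 * (Ut * Uz) + (1/2 : ℂ) • (Ut * Ut) := by
  simpa only [map_add, map_mul, map_smul, map_ofNat] using! RingQuot.mkAlgHom_rel ℂ URel.rel_xy

theorem Uy_mul_Uz : Uy * Uz = Uz * Uy - Ut * Uy := by
  simpa only [map_sub, map_mul] using! RingQuot.mkAlgHom_rel ℂ URel.rel_yz

theorem Uz_mul_Ux : Uz * Ux = Ux * Uz - Ut * Ux := by
  simpa only [map_sub, map_mul] using! RingQuot.mkAlgHom_rel ℂ URel.rel_zx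

theorem semiconjBy_Ux : SemiconjBy Ux Uz (Uz + Ut) := by
  rw [SemiconjBy, add_mul, Uz_mul_Ux, sub_add_cancel]

theorem semiconjBy_Uy : SemiconjBy Uy (Uz + Ut) Uz := by
  rw [SemiconjBy, mul_add, Uy_mul_Uz, commute_Uy_Ut.eq, sub_add_cancel]

theorem Ug_eq_sub_Uy_mul_Ux : Ug = shiftQuad (1/2 : ℂ) Ut Uz - Uy * Ux :=
  rfl

theorem Ug_eq_sub_Ux_mul_Uy : Ug = shiftQuad (1/2 : ℂ) Ut (Uz + Ut) - Ux * Uy := by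
  rw [Ug_eq_sub_Uy_mul_Ux, shiftQuad_add_self _ commute_Uz_Ut, Ux_mul_Uy, sub_half (1 : ℂ)]
  abel

theorem commute_Ug_Ux : Commute Ug Ux :=
  commute_sub_mul_of_semiconjBy (semiconjBy_shiftQuad _ commute_Ux_Ut semiconjBy_Ux)
    Ug_eq_sub_Ux_mul_Uy

theorem commute_Ug_Uy : Commute Ug Uy := by
  rw [Ug_eq_sub_Ux_mul_Uy]
  exact commute_sub_mul_of_semiconjBy (semiconjBy_shiftQuad _ commute_Uy_Ut semiconjBy_Uy)
    Ug_eq_sub_Ux_mul_Uy.symm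

theorem commute_Ug_Uz : Commute Ug Uz := by
  have hQ : Commute (shiftQuad (1/2 : ℂ) Ut Uz) Uz :=
    (commute_shiftQuad _ commute_Uz_Ut (.refl Uz)).symm
  have hyx : Commute (Uy * Ux) Uz := semiconjBy_Uy.mul_left semiconjBy_Ux
  exact hQ.sub_left hyx

theorem commute_Ug_Ut : Commute Ug Ut := by
  have hQ : Commute (shiftQuad (1/2 : ℂ) Ut Uz) Ut :=
    (commute_shiftQuad _ (.refl Ut) commute_Uz_Ut.symm).symm
  have hyx : Commute (Uy * Ux) Ut := commute_Uy_Ut.mul_left commute_Ux_Ut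
  exact hQ.sub_left hyx

theorem commute_Ug (u : U) : Commute Ug u := by
  refine commute_of_commute_map_ι (RingQuot.mkAlgHom_surjective ℂ URel) (fun i => ?_) u
  fin_cases i
  exacts [commute_Ug_Ux, commute_Ug_Uy, commute_Ug_Uz, commute_Ug_Ut]

theorem Upi_surjective : Function.Surjective Upi :=
  RingQuot.mkAlgHom_surjective ℂ U1Rel

theorem Upi_Ut : Upi Ut = 1 := by
  simpa only [map_one] using! RingQuot.mkAlgHom_rel ℂ U1Rel.t_eq_one

theorem Upi_Ug : Upi Ug = U1p := by
  simp only [Ug, U1p, map_sub, map_mul, map_smul, Upi_Ut, one_mul]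

/-- In the quantization `U`, the element `g = z² − (1/2)tz − yx`
is central; and in the deformation `U₁ = U/(t−1)U`, the element
`p = z² − (1/2)z − yx` is central. -/
theorem stmt8 : (∀ u : U, Ug * u = u * Ug) ∧ (∀ u : U1, U1p * u = u * U1p) := by
  refine ⟨commute_Ug, Upi_surjective.forall.2 fun v => ?_⟩
  rw [← Upi_Ug]
  exact (commute_Ug v).map Upi

end
end

section
/- For σ ∈ ℂ, let T_{σ,1} be the ℂ-algebra generated by x, y, z subject to the relations xy = yx + 2z + 1/2, yz = zy − y, zx = xz − x and yx = z² − (1/2)z − σ. Then T_{σ,1} is a simple ring if and only if σ ≠ (4d² − 1)/16 for every integer d ≥ 1. -/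
noncomputable section

/-- Generators of the free algebra on `x, y, z` (indices `0, 1, 2`). -/
def F3 (i : Fin 3) : FreeAlgebra ℂ (Fin 3) := FreeAlgebra.ι ℂ i

/-- Simplicity of the representation of a ℂ-algebra `R` on `ℂ^d` given by an algebra
homomorphism `ρ : R → End ℂ (ℂ^d)`: the corresponding `R`-module is nonzero and has no
nontrivial submodules. -/
def SimpleRep (R : Type*) [Ring R] [Algebra ℂ R] (d : ℕ)
    (ρ : R →ₐ[ℂ] Module.End ℂ (Fin d → ℂ)) : Prop :=
  (∃ v : Fin d → ℂ, v ≠ 0) ∧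
    ∀ V : Submodule ℂ (Fin d → ℂ), (∀ a : R, ∀ v ∈ V, ρ a v ∈ V) → V = ⊥ ∨ V = ⊤

/-- The defining relations of `T_{σ,1}`:
`xy = yx + 2z + 1/2`, `yz = zy − y`, `zx = xz − x`, `yx = z² − (1/2)z − σ`. -/
inductive TRel (s : ℂ) : FreeAlgebra ℂ (Fin 3) → FreeAlgebra ℂ (Fin 3) → Prop
  | rel_xy : TRel s (F3 0 * F3 1) (F3 1 * F3 0 + 2 * F3 2 + (1/2 : ℂ) • 1)
  | rel_yz : TRel s (F3 1 * F3 2) (F3 2 * F3 1 - F3 1)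
  | rel_zx : TRel s (F3 2 * F3 0) (F3 0 * F3 2 - F3 0)
  | rel_yx : TRel s (F3 1 * F3 0) (F3 2 * F3 2 - (1/2 : ℂ) • F3 2 - s • 1)

/-- The algebra `T_{σ,1}`. -/
abbrev TAlg (s : ℂ) : Type := RingQuot (TRel s)

/-!
Over a field `k` of characteristic zero let `A` be generated by `x, y, z` with `xz = (z + 1)x`,
`yz = (z - 1)y`, `yx = a(z)`, `xy = a(z + 1)`; completing the relations of `T_{σ,1}` shows that it
is the case `a = z² - z/2 - σ`. The algebra `A` is simple if and only if `a(z)` and `a(z + d)` are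
coprime for every integer `d ≥ 1`, and for the quadratic `a` the difference of these two polynomials
is linear, so that coprimality fails exactly when its root is a root of `a`.

Commuting with `z` grades `A` by weights, and a nonzero two-sided ideal `I` contains the weight
components of its elements; multiplying one of them by a power of `x` or `y` gives a nonzero
`g(z) ∈ I`. Then `x ^ n * g(z) * y ^ n = g(z + n) * P(z)` and
`y ^ n * g(z) * x ^ n = g(z - n) * Q(z)` also lie in `I`, where `P = a(z + 1) … a(z + n)` and
`Q = a(z) … a(z - n + 1)`. If `n` is such that `g(z)` and `g(z + n)` are coprime, then
`P(z), Q(z) ∈ I`, and when the shifts of `a` are pairwise coprime this gives `1 ∈ I`.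

Conversely, let `t` be a common root of `a(z)` and `a(z + d)` in a finite extension `K` of `k`. Then
`z` acts on `K ^ d` by `t, t + 1, …, t + d - 1` on the coordinates, and `x`, `y` are weighted shifts
of the coordinates, whose link between the last and the first one vanishes because
`a(t) = a(t + d) = 0`. A simple `A` would embed into the endomorphisms of this finite-dimensional
space, although it contains the polynomial ring `k[z]`.
-/

open Polynomial

section PolynomialShifts

lemma aeval_taylor {R A : Type*} [CommSemiring R] [Semiring A] [Algebra R A] (r : R) (p : R[X])
    (z : A) : aeval z (taylor r p) = aeval (z + algebraMap R A r) p := by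
  rw [taylor_apply, aeval_comp, map_add, aeval_X, aeval_C]

lemma isCoprime_taylor {R : Type*} [CommSemiring R] (r : R) {p q : R[X]} (h : IsCoprime p q) :
    IsCoprime (taylor r p) (taylor r q) :=
  h.map (taylorAlgHom r).toRingHom

variable {k : Type*} [Field k]

lemma exists_isCoprime_taylor_natCast [CharZero k] {p : k[X]} (hp : p ≠ 0) :
    ∃ n : ℕ, IsCoprime p (taylor (n : k) p) := by
  let Z : Set (AlgebraicClosure k) := p.rootSet (AlgebraicClosure k)
  have hZ : (Set.image2 (· - ·) Z Z).Finite :=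
    (p.rootSet_finite _).image2 _ (p.rootSet_finite _)
  obtain ⟨n, hn⟩ := (hZ.preimage (Nat.cast_injective (R := AlgebraicClosure k)).injOn).exists_notMem
  refine ⟨n, (isCoprime_iff_aeval_ne_zero_of_isAlgClosed k (AlgebraicClosure k) _ _).2 fun t => ?_⟩
  by_contra! ⟨ht, ht'⟩
  rw [aeval_taylor, map_natCast] at ht'
  exact hn ⟨t + n, (mem_rootSet_of_ne hp).2 ht', t, (mem_rootSet_of_ne hp).2 ht,
    add_sub_cancel_left _ _⟩

lemma exists_irreducible_dvd_of_not_isCoprime {p q : k[X]} (h : ¬ IsCoprime p q) :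
    ∃ f, Irreducible f ∧ f ∣ p ∧ f ∣ q := by
  rw [isCoprime_iff_aeval_ne_zero_of_isAlgClosed k (AlgebraicClosure k)] at h
  push Not at h
  obtain ⟨t, hp, hq⟩ := h
  exact ⟨minpoly k t, minpoly.irreducible (Algebra.IsIntegral.isIntegral t), minpoly.dvd k t hp,
    minpoly.dvd k t hq⟩

lemma isCoprime_prod_taylor {p : k[X]} (hp : ∀ d : ℕ, 1 ≤ d → IsCoprime p (taylor (d : k) p))
    (m n : ℕ) : IsCoprime (∏ i ∈ Finset.range m, taylor (i * -1 : k) p)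
      (∏ j ∈ Finset.range n, taylor (j * 1 : k) (taylor 1 p)) := by
  refine IsCoprime.prod_left fun i _ => IsCoprime.prod_right fun j _ => ?_
  convert isCoprime_taylor (i * -1 : k) (hp (i + j + 1) (by omega)) using 1
  rw [taylor_taylor, taylor_taylor]
  congr 2
  push_cast
  ring

lemma isCoprime_X_sub_C_iff {p : k[X]} {r : k} : IsCoprime p (X - C r) ↔ p.eval r ≠ 0 := by
  rw [isCoprime_comm, (irreducible_X_sub_C r).coprime_iff_not_dvd, dvd_iff_isRoot, IsRoot.def]

end PolynomialShifts

lemma mem_of_isCoprime_mul_mem {R : Type*} [CommSemiring R] {J : Ideal R} {p q r : R}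
    (hpq : IsCoprime p q) (hp : p * r ∈ J) (hq : q * r ∈ J) : r ∈ J := by
  obtain ⟨b, c, hbc⟩ := hpq
  have hr : r = b * (p * r) + c * (q * r) := by
    rw [← mul_assoc, ← mul_assoc, ← add_mul, hbc, one_mul]
  rw [hr]
  exact J.add_mem (J.mul_mem_left b hp) (J.mul_mem_left c hq)

lemma eq_top_of_one_mem_of_mul_mem {R A : Type*} [CommSemiring R] [Semiring A] [Algebra R A]
    {s : Set A} (hs : Algebra.adjoin R s = ⊤) {S : Submodule R A} (hone : 1 ∈ S)
    (hmul : ∀ g ∈ s, ∀ w ∈ S, g * w ∈ S) : S = ⊤ := by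
  have hmul' : ∀ b ∈ Algebra.adjoin R s, ∀ w ∈ S, b * w ∈ S := by
    intro b hb
    induction hb using Algebra.adjoin_induction with
    | mem g hg => exact hmul g hg
    | algebraMap r => intro w hw; rw [← Algebra.smul_def]; exact S.smul_mem r hw
    | add b c _ _ hb hc => intro w hw; rw [add_mul]; exact S.add_mem (hb w hw) (hc w hw)
    | mul b c _ _ hb hc => intro w hw; rw [mul_assoc]; exact hb _ (hc w hw)
  refine eq_top_iff.2 fun b _ => ?_
  simpa using hmul' b (hs ▸ Algebra.mem_top) 1 hone

section Eigenvectors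

lemma mem_invtSubmodule_aeval {R M : Type*} [CommSemiring R] [AddCommMonoid M] [Module R M]
    {f : Module.End R M} {V : Submodule R M} (hV : V ∈ f.invtSubmodule) (q : R[X]) :
    V ∈ (aeval f q).invtSubmodule := by
  intro w hw
  induction q using Polynomial.induction_on generalizing w with
  | C r => simpa using V.smul_mem r hw
  | add p q hp hq => simpa using V.add_mem (hp hw) (hq hw)
  | monomial n r ih =>
    rw [Submodule.mem_comap, pow_succ, ← mul_assoc, map_mul, aeval_X, Module.End.mul_apply]
    exact ih (hV hw)

-- The Lagrange polynomial of the `i`-th eigenvalue, evaluated at `f`, extracts the `i`-th summand.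
lemma mem_of_sum_eigenvectors_mem {K V ι : Type*} [Field K] [AddCommGroup V] [Module K V]
    {f : Module.End K V} {W : Submodule K V} (hW : W ∈ f.invtSubmodule) {s : Finset ι}
    {μ : ι → K} (hμ : Set.InjOn μ s) {v : ι → V} (hv : ∀ i ∈ s, f (v i) = μ i • v i)
    (hsum : ∑ i ∈ s, v i ∈ W) {i : ι} (hi : i ∈ s) : v i ∈ W := by
  classical
  have hi_eq : aeval f (Lagrange.basis s μ i) (∑ j ∈ s, v j) = v i := by
    rw [map_sum, Finset.sum_eq_single_of_mem i hi fun j hj hji => ?_,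
      Module.End.aeval_apply_of_mem_apply_eq_smul (hv i hi), Lagrange.eval_basis_self hμ hi,
      one_smul]
    rw [Module.End.aeval_apply_of_mem_apply_eq_smul (hv j hj),
      Lagrange.eval_basis_of_ne hji.symm hj, zero_smul]
  exact hi_eq ▸ mem_invtSubmodule_aeval hW _ hsum

end Eigenvectors

section ShiftingElements

variable {k A : Type*} [CommRing k] [Ring A] [Algebra k A] {u v z : A} {r : k}

lemma semiconjBy_aeval_taylor (hu : SemiconjBy u z (z + algebraMap k A r)) (p : k[X]) :
    SemiconjBy u (aeval z p) (aeval z (taylor r p)) := by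
  rw [aeval_taylor]
  induction p using Polynomial.induction_on' with
  | add p q hp hq => simpa only [map_add] using hp.add_right hq
  | monomial n c =>
    simp only [aeval_monomial]
    exact SemiconjBy.mul_right (Algebra.commute_algebraMap_right c u) (hu.pow_right n)

lemma semiconjBy_pow_left (hu : SemiconjBy u z (z + algebraMap k A r)) (n : ℕ) :
    SemiconjBy (u ^ n) z (z + algebraMap k A (n * r)) := by
  induction n with
  | zero => simp
  | succ n ih =>
    have hn : SemiconjBy u (z + algebraMap k A (n * r))
        (z + algebraMap k A r + algebraMap k A (n * r)) :=
      hu.add_right (Algebra.commute_algebraMap_right _ u)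
    rw [pow_succ', Nat.cast_succ, add_one_mul, add_comm (_ * r), map_add, ← add_assoc]
    exact hn.mul_left ih

lemma pow_mul_pow_eq_aeval_prod {c : k[X]} (hu : SemiconjBy u z (z + algebraMap k A r))
    (huv : u * v = aeval z c) (n : ℕ) :
    u ^ n * v ^ n = aeval z (∏ i ∈ Finset.range n, taylor (i * r) c) := by
  induction n with
  | zero => simp
  | succ n ih =>
    calc u ^ (n + 1) * v ^ (n + 1)
        = u * (u ^ n * v ^ n) * v := by rw [pow_succ', pow_succ]; simp only [mul_assoc]
      _ = aeval z (taylor r (∏ i ∈ Finset.range n, taylor (i * r) c)) * (u * v) := by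
        rw [ih, (semiconjBy_aeval_taylor hu _).eq, mul_assoc]
      _ = aeval z (∏ i ∈ Finset.range (n + 1), taylor (i * r) c) := by
        have hprod := map_prod (taylorAlgHom r) (fun i : ℕ => taylor (i * r) c) (Finset.range n)
        simp only [taylorAlgHom_apply, taylor_taylor] at hprod
        rw [huv, ← map_mul, hprod, Finset.prod_range_succ']
        simp [add_mul, add_comm]

lemma aeval_taylor_mul_prod_mem {I : TwoSidedIdeal A} {c p : k[X]}
    (hu : SemiconjBy u z (z + algebraMap k A r)) (huv : u * v = aeval z c)
    (hp : aeval z p ∈ I) (n : ℕ) :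
    aeval z (taylor (n * r) p * ∏ i ∈ Finset.range n, taylor (i * r) c) ∈ I := by
  rw [map_mul, ← pow_mul_pow_eq_aeval_prod hu huv, ← mul_assoc,
    ← (semiconjBy_aeval_taylor (semiconjBy_pow_left hu n) p).eq]
  exact I.mul_mem_right _ _ (I.mul_mem_left _ _ hp)

end ShiftingElements

/-- The relations of the generalized Weyl algebra `k[z](σ, a)` of degree one, where `σ` is the
shift `z ↦ z + 1` of the polynomial ring `k[z]` and `a ∈ k[z]`. -/
structure IsWeylTriple {k A : Type*} [CommRing k] [Ring A] [Algebra k A] (a : k[X]) (x y z : A) :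
    Prop where
  x_mul_z : x * z = (z + 1) * x
  y_mul_z : y * z = (z - 1) * y
  y_mul_x : y * x = aeval z a
  x_mul_y : x * y = aeval (z + 1) a

/-- The monomial of weight `n`: the power `x ^ n` if `0 ≤ n`, and `y ^ (-n)` if `n < 0`. -/
def weightMonomial {A : Type*} [Ring A] (x y : A) : ℤ → A
  | .ofNat n => x ^ n
  | .negSucc n => y ^ (n + 1)

/-- The component `k[z] · weightMonomial x y n` of weight `n` in a generalized Weyl algebra. -/
def weightSpace (k : Type*) {A : Type*} [CommRing k] [Ring A] [Algebra k A] (x y z : A) (n : ℤ) :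
    Submodule k A :=
  (LinearMap.mulRight k (weightMonomial x y n) ∘ₗ (aeval z).toLinearMap).range

lemma mem_weightSpace {k A : Type*} [CommRing k] [Ring A] [Algebra k A] {x y z w : A} {n : ℤ} :
    w ∈ weightSpace k x y z n ↔ ∃ p : k[X], aeval z p * weightMonomial x y n = w :=
  Iff.rfl

namespace IsWeylTriple

section CommRing

variable {k A : Type*} [CommRing k] [Ring A] [Algebra k A] {a : k[X]} {x y z : A}
  (h : IsWeylTriple a x y z)

include h

lemma semiconjBy_x : SemiconjBy x z (z + algebraMap k A 1) := by
  rw [map_one]; exact h.x_mul_z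

lemma semiconjBy_y : SemiconjBy y z (z + algebraMap k A (-1)) := by
  rw [map_neg, map_one, ← sub_eq_add_neg]; exact h.y_mul_z

lemma x_mul_y_eq_aeval_taylor : x * y = aeval z (taylor 1 a) := by
  rw [h.x_mul_y, aeval_taylor, map_one]

lemma semiconjBy_weightMonomial (n : ℤ) :
    SemiconjBy (weightMonomial x y n) z (z + algebraMap k A n) := by
  cases n with
  | ofNat n => simpa [weightMonomial] using semiconjBy_pow_left h.semiconjBy_x n
  | negSucc n => simpa [weightMonomial] using semiconjBy_pow_left h.semiconjBy_y (n + 1)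

lemma mul_sub_mul_of_mem_weightSpace {n : ℤ} {w : A} (hw : w ∈ weightSpace k x y z n) :
    w * z - z * w = (n : k) • w := by
  obtain ⟨p, rfl⟩ := mem_weightSpace.1 hw
  have hz : aeval z p * z = z * aeval z p := by
    simpa only [map_mul, aeval_X] using congrArg (aeval z) (mul_comm p X)
  rw [mul_assoc, (h.semiconjBy_weightMonomial n).eq, add_mul, mul_add, ← mul_assoc, hz,
    ← Algebra.smul_def, mul_smul_comm, mul_assoc, add_sub_cancel_left]

lemma exists_x_mul_weightMonomial (n : ℤ) :
    ∃ q : k[X], x * weightMonomial x y n = aeval z q * weightMonomial x y (n + 1) := by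
  rcases n with n | n
  · exact ⟨1, by rw [map_one, one_mul, weightMonomial, ← pow_succ']; rfl⟩
  · refine ⟨taylor 1 a, ?_⟩
    rw [← h.x_mul_y_eq_aeval_taylor, weightMonomial, pow_succ', mul_assoc]
    cases n with
    | zero => rw [pow_zero]; exact congrArg (fun w => x * (y * w)) (pow_zero x).symm
    | succ n => rfl

lemma exists_y_mul_weightMonomial (n : ℤ) :
    ∃ q : k[X], y * weightMonomial x y n = aeval z q * weightMonomial x y (n - 1) := by
  rcases n with (_ | n) | n
  · refine ⟨1, ?_⟩
    rw [show Int.ofNat 0 - 1 = Int.negSucc 0 from rfl]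
    simp [weightMonomial]
  · refine ⟨a, ?_⟩
    rw [← h.y_mul_x, show Int.ofNat (n + 1) - 1 = Int.ofNat n by simp, weightMonomial,
      weightMonomial, pow_succ', mul_assoc]
  · exact ⟨1, by rw [map_one, one_mul, weightMonomial, ← pow_succ']; rfl⟩

lemma x_mul_mem_weightSpace {n : ℤ} {w : A} (hw : w ∈ weightSpace k x y z n) :
    x * w ∈ weightSpace k x y z (n + 1) := by
  obtain ⟨p, rfl⟩ := mem_weightSpace.1 hw
  obtain ⟨q, hq⟩ := h.exists_x_mul_weightMonomial n
  refine mem_weightSpace.2 ⟨taylor 1 p * q, ?_⟩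
  rw [map_mul, mul_assoc, ← hq, ← mul_assoc, ← (semiconjBy_aeval_taylor h.semiconjBy_x p).eq,
    mul_assoc]

lemma y_mul_mem_weightSpace {n : ℤ} {w : A} (hw : w ∈ weightSpace k x y z n) :
    y * w ∈ weightSpace k x y z (n - 1) := by
  obtain ⟨p, rfl⟩ := mem_weightSpace.1 hw
  obtain ⟨q, hq⟩ := h.exists_y_mul_weightMonomial n
  refine mem_weightSpace.2 ⟨taylor (-1) p * q, ?_⟩
  rw [map_mul, mul_assoc, ← hq, ← mul_assoc, ← (semiconjBy_aeval_taylor h.semiconjBy_y p).eq,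
    mul_assoc]

lemma iSup_weightSpace_eq_top (hgen : Algebra.adjoin k {x, y, z} = ⊤) :
    ⨆ n, weightSpace k x y z n = ⊤ := by
  have hmul : ∀ (g : A) (e : ℤ → ℤ),
      (∀ n, ∀ w ∈ weightSpace k x y z n, g * w ∈ weightSpace k x y z (e n)) →
      ∀ w ∈ ⨆ n, weightSpace k x y z n, g * w ∈ ⨆ n, weightSpace k x y z n := by
    intro g e hg
    have hle : ⨆ n, weightSpace k x y z n ≤
        (⨆ n, weightSpace k x y z n).comap (LinearMap.mulLeft k g) :=
      iSup_le fun n w hw => Submodule.mem_iSup_of_mem (e n) (hg n w hw)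
    exact fun w hw => hle hw
  refine eq_top_of_one_mem_of_mul_mem hgen
    (Submodule.mem_iSup_of_mem 0 (mem_weightSpace.2 ⟨1, ?_⟩)) ?_
  · rw [map_one, one_mul]; exact pow_zero x
  · rintro g (rfl | rfl | rfl)
    · exact hmul g (· + 1) fun n w => h.x_mul_mem_weightSpace
    · exact hmul g (· - 1) fun n w => h.y_mul_mem_weightSpace
    · refine hmul g (fun n => n) fun n w hw => ?_
      obtain ⟨p, rfl⟩ := mem_weightSpace.1 hw
      exact mem_weightSpace.2 ⟨X * p, by rw [map_mul, aeval_X, mul_assoc]⟩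

lemma exists_weightMonomial_mul_eq_aeval [IsDomain k] (ha : a ≠ 0) (n : ℤ) :
    ∃ (v : A) (q : k[X]), q ≠ 0 ∧ weightMonomial x y n * v = aeval z q := by
  have hprod : ∀ (r : k) (m : ℕ) {c : k[X]}, c ≠ 0 →
      ∏ i ∈ Finset.range m, taylor (i * r) c ≠ 0 := fun r m c hc =>
    Finset.prod_ne_zero_iff.2 fun i _ => by rwa [Ne, taylor_eq_zero]
  cases n with
  | ofNat m =>
    exact ⟨_, _, hprod 1 m (by rwa [Ne, taylor_eq_zero]),
      pow_mul_pow_eq_aeval_prod h.semiconjBy_x h.x_mul_y_eq_aeval_taylor m⟩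
  | negSucc m =>
    exact ⟨_, _, hprod (-1) (m + 1) ha,
      pow_mul_pow_eq_aeval_prod h.semiconjBy_y h.y_mul_x (m + 1)⟩

end CommRing

section Field

variable {k A : Type*} [Field k] [CharZero k] [Ring A] [Algebra k A] {a : k[X]} {x y z : A}
  (h : IsWeylTriple a x y z)

include h

-- The weight components of an element are eigenvectors of `w ↦ w * z - z * w`, which preserves `I`.
lemma mem_of_sum_weightSpace_mem {I : TwoSidedIdeal A} {s : Finset ℤ} {w : ℤ → A}
    (hw : ∀ n, w n ∈ weightSpace k x y z n) (hsum : ∑ n ∈ s, w n ∈ I) {n : ℤ} (hn : n ∈ s) :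
    w n ∈ I := by
  let ad : Module.End k A := LinearMap.mulRight k z - LinearMap.mulLeft k z
  let W : Submodule k A := I.asIdeal.restrictScalars k
  have hW : W ∈ ad.invtSubmodule := fun w hw =>
    I.sub_mem (I.mul_mem_right w z hw) (I.mul_mem_left z w hw)
  exact mem_of_sum_eigenvectors_mem hW (μ := fun n : ℤ => (n : k)) (Int.cast_injective.injOn)
    (fun n _ => h.mul_sub_mul_of_mem_weightSpace (hw n)) hsum hn

lemma exists_aeval_mem_of_ne_bot (hgen : Algebra.adjoin k {x, y, z} = ⊤) (ha : a ≠ 0)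
    {I : TwoSidedIdeal A} (hI : I ≠ ⊥) : ∃ p : k[X], p ≠ 0 ∧ aeval z p ∈ I := by
  obtain ⟨b, hbI, hb⟩ := SetLike.exists_of_lt (bot_lt_iff_ne_bot.2 hI)
  obtain ⟨w, hw, rfl⟩ := (Submodule.mem_iSup_iff_exists_finsupp (weightSpace k x y z) b).1
    (h.iSup_weightSpace_eq_top hgen ▸ Submodule.mem_top)
  obtain ⟨n, hn, hwn⟩ := Finset.exists_ne_zero_of_sum_ne_zero hb
  obtain ⟨p, hp⟩ := mem_weightSpace.1 (hw n)
  obtain ⟨v, q, hq, hv⟩ := h.exists_weightMonomial_mul_eq_aeval ha n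
  refine ⟨p * q, mul_ne_zero ?_ hq, ?_⟩
  · rintro rfl
    exact hwn (by rw [← hp, map_zero, zero_mul])
  · rw [map_mul, ← hv, ← mul_assoc, hp]
    exact I.mul_mem_right _ _ (h.mem_of_sum_weightSpace_mem hw hbI hn)

theorem isSimpleRing [Nontrivial A] (hgen : Algebra.adjoin k {x, y, z} = ⊤)
    (ha : ∀ d : ℕ, 1 ≤ d → IsCoprime a (taylor (d : k) a)) : IsSimpleRing A := by
  refine .of_eq_bot_or_eq_top fun I => or_iff_not_imp_left.2 fun hI => ?_
  have ha₀ : a ≠ 0 := by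
    rintro rfl
    exact not_isCoprime_zero_zero (by simpa using ha 1 le_rfl)
  let J : Ideal k[X] := I.asIdeal.comap (aeval z)
  obtain ⟨g, hg, hgJ⟩ : ∃ g, g ≠ 0 ∧ g ∈ J := h.exists_aeval_mem_of_ne_bot hgen ha₀ hI
  obtain ⟨n, hn⟩ := exists_isCoprime_taylor_natCast hg
  let P : k[X] := ∏ i ∈ Finset.range n, taylor (i * 1 : k) (taylor 1 a)
  let Q : k[X] := ∏ i ∈ Finset.range n, taylor (i * -1 : k) a
  have hP : P ∈ J := by
    refine mem_of_isCoprime_mul_mem hn (J.mul_mem_right _ hgJ) ?_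
    rw [← mul_one (n : k)]
    exact aeval_taylor_mul_prod_mem h.semiconjBy_x h.x_mul_y_eq_aeval_taylor hgJ n
  have hQ : Q ∈ J := by
    have hn' : IsCoprime (taylor (n * -1 : k) g) g := by
      simpa [taylor_taylor] using isCoprime_taylor (n * -1 : k) hn
    exact mem_of_isCoprime_mul_mem hn'
      (aeval_taylor_mul_prod_mem h.semiconjBy_y h.y_mul_x hgJ n) (J.mul_mem_right _ hgJ)
  have hQP : IsCoprime Q P := isCoprime_prod_taylor ha n n
  have hone : (1 : k[X]) ∈ J :=
    mem_of_isCoprime_mul_mem hQP (J.mul_mem_right _ hQ) (J.mul_mem_right _ hP)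
  exact (I.one_mem_iff).1 (by simpa [J] using hone)

end Field

end IsWeylTriple

section Representations

variable {k : Type*} [CommRing k] {a : k[X]}

lemma isWeylTriple_twisted_mul {C : Type*} [CommRing C] [Algebra k C] (τ : C ≃ₐ[k] C) {b c t : C}
    (hb : b * τ t = b * (t + 1)) (hc : c * τ t = c * (t + 1)) (hbc : b * c = aeval (t + 1) a)
    (hbc' : b * c = aeval (τ t) a) :
    IsWeylTriple a (LinearMap.mulLeft k b ∘ₗ τ.toLinearMap)
      (τ.symm.toLinearMap ∘ₗ LinearMap.mulLeft k c) (Algebra.lmul k C t) where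
  x_mul_z := by
    ext f
    change b * τ (t * f) = t * (b * τ f) + b * τ f
    rw [map_mul]
    linear_combination τ f * hb
  y_mul_z := by
    ext f
    apply τ.injective
    change τ (τ.symm (c * (t * f))) = τ (t * τ.symm (c * f) - τ.symm (c * f))
    rw [map_sub, map_mul τ, τ.apply_symm_apply, τ.apply_symm_apply]
    linear_combination -f * hc
  y_mul_x := by
    ext f
    apply τ.injective
    rw [aeval_algHom_apply]
    change τ (τ.symm (c * (b * τ f))) = τ (aeval t a * f)
    rw [τ.apply_symm_apply, map_mul, ← aeval_algHom_apply, ← hbc']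
    ring
  x_mul_y := by
    ext f
    rw [← map_one (Algebra.lmul k C), ← map_add, aeval_algHom_apply, ← hbc]
    change b * τ (τ.symm (c * f)) = b * c * f
    rw [τ.apply_symm_apply, mul_assoc]

lemma isWeylTriple_polynomial (a : k[X]) :
    IsWeylTriple a (LinearMap.mulLeft k 1 ∘ₗ (taylorEquiv (1 : k)).toLinearMap)
      ((taylorEquiv (1 : k)).symm.toLinearMap ∘ₗ LinearMap.mulLeft k (taylor 1 a))
      (Algebra.lmul k k[X] X) := by
  have hX : taylorEquiv (1 : k) X = X + 1 := by
    change taylor 1 X = X + 1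
    rw [taylor_X, C_1]
  have ha : 1 * taylor 1 a = aeval (X + 1) a := by
    rw [one_mul, ← map_one (algebraMap k k[X]), ← aeval_taylor, aeval_X_left_apply]
  refine isWeylTriple_twisted_mul _ ?_ ?_ ha ?_ <;> rw [hX]
  exact ha

lemma isWeylTriple_cyclic {K : Type*} [CommRing K] [Algebra k K] {t : K} {n : ℕ}
    (h₀ : aeval t a = 0) (h₁ : aeval (t + (n + 1 : ℕ)) a = 0) :
    ∃ x y z : Module.End k (Fin (n + 1) → K), IsWeylTriple a x y z := by
  let τ : (Fin (n + 1) → K) ≃ₐ[k] (Fin (n + 1) → K) :=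
    AlgEquiv.piCongrLeft' k (fun _ => K) (Equiv.subRight 1)
  have hτ (f : Fin (n + 1) → K) (i : Fin (n + 1)) : τ f i = f (i + 1) := rfl
  let u : Fin (n + 1) → K := fun i => t + (i : ℕ)
  have hlast : τ u (Fin.last n) = t := by simp [hτ, u]
  have hcast (i : Fin n) : τ u i.castSucc = u i.castSucc + 1 := by
    simp [hτ, u, add_assoc]
  let b : Fin (n + 1) → K := Fin.lastCases 0 fun _ => 1
  have hroot : aeval (u (Fin.last n) + 1) a = 0 := by simpa [u, add_assoc] using h₁
  refine ⟨_, _, _, isWeylTriple_twisted_mul τ (t := u) (b := b) (c := aeval (u + 1) a) ?_ ?_ ?_ ?_⟩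
  all_goals
    ext i
    cases i using Fin.lastCases <;> simp [b, hroot, hlast, hcast, h₀, aeval_pi_apply₂]

end Representations

namespace GeneralizedWeylAlgebra

variable {k : Type*} [CommRing k]

/-- The relations `xz = (z + 1)x`, `yz = (z - 1)y`, `yx = a(z)`, `xy = a(z + 1)` between the
generators `x, y, z` of the free algebra, indexed by `0, 1, 2` as for `TRel`. -/
inductive Rel (a : k[X]) : FreeAlgebra k (Fin 3) → FreeAlgebra k (Fin 3) → Prop
  | x_mul_z : Rel a (FreeAlgebra.ι k 0 * FreeAlgebra.ι k 2)
      ((FreeAlgebra.ι k 2 + 1) * FreeAlgebra.ι k 0)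
  | y_mul_z : Rel a (FreeAlgebra.ι k 1 * FreeAlgebra.ι k 2)
      ((FreeAlgebra.ι k 2 - 1) * FreeAlgebra.ι k 1)
  | y_mul_x : Rel a (FreeAlgebra.ι k 1 * FreeAlgebra.ι k 0) (aeval (FreeAlgebra.ι k 2) a)
  | x_mul_y : Rel a (FreeAlgebra.ι k 0 * FreeAlgebra.ι k 1) (aeval (FreeAlgebra.ι k 2 + 1) a)

end GeneralizedWeylAlgebra

/-- The generalized Weyl algebra `k[z](σ, a)` of degree one, for the shift `σ : z ↦ z + 1`: the
universal algebra with a triple of elements satisfying `IsWeylTriple a`. -/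
abbrev GeneralizedWeylAlgebra {k : Type*} [CommRing k] (a : k[X]) : Type _ :=
  RingQuot (GeneralizedWeylAlgebra.Rel a)

namespace GeneralizedWeylAlgebra

section CommRing

variable {k : Type*} [CommRing k] (a : k[X])

/-- The generators `x, y, z` of the generalized Weyl algebra, indexed by `0, 1, 2`. -/
def gen (i : Fin 3) : GeneralizedWeylAlgebra a :=
  RingQuot.mkAlgHom k (Rel a) (FreeAlgebra.ι k i)

lemma forall_rel_iff {a : k[X]} {B : Type*} [Ring B] [Algebra k B]
    {ψ : FreeAlgebra k (Fin 3) →ₐ[k] B} :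
    (∀ ⦃u v⦄, Rel a u v → ψ u = ψ v) ↔
      IsWeylTriple a (ψ (FreeAlgebra.ι k 0)) (ψ (FreeAlgebra.ι k 1)) (ψ (FreeAlgebra.ι k 2)) := by
  constructor
  · intro h
    exact ⟨by simpa using h .x_mul_z, by simpa using h .y_mul_z,
      by simpa [← aeval_algHom_apply] using h .y_mul_x,
      by simpa [← aeval_algHom_apply] using h .x_mul_y⟩
  · rintro h u v (_ | _ | _ | _)
    · simpa using h.x_mul_z
    · simpa using h.y_mul_z
    · simpa [← aeval_algHom_apply] using h.y_mul_x
    · simpa [← aeval_algHom_apply] using h.x_mul_y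

lemma isWeylTriple_gen : IsWeylTriple a (gen a 0) (gen a 1) (gen a 2) :=
  forall_rel_iff.1 fun _ _ h => RingQuot.mkAlgHom_rel k h

lemma adjoin_gen_eq_top : Algebra.adjoin k {gen a 0, gen a 1, gen a 2} = ⊤ := by
  have hrange : {gen a 0, gen a 1, gen a 2} =
      RingQuot.mkAlgHom k (Rel a) '' Set.range (FreeAlgebra.ι k) := by
    rw [← Set.range_comp]
    ext w
    simp [gen, Fin.exists_fin_succ, eq_comm]
  rw [hrange, ← AlgHom.map_adjoin, FreeAlgebra.adjoin_range_ι, Algebra.map_top,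
    AlgHom.range_eq_top]
  exact RingQuot.mkAlgHom_surjective k _

variable {a}

/-- The universal property: a triple satisfying `IsWeylTriple a` is the image of the generators
under a homomorphism. -/
def lift {B : Type*} [Ring B] [Algebra k B] {x y z : B} (h : IsWeylTriple a x y z) :
    GeneralizedWeylAlgebra a →ₐ[k] B :=
  RingQuot.liftAlgHom k ⟨FreeAlgebra.lift k ![x, y, z],
    forall_rel_iff.2 (by simpa using h)⟩

lemma lift_gen {B : Type*} [Ring B] [Algebra k B] {x y z : B} (h : IsWeylTriple a x y z)
    (i : Fin 3) : lift h (gen a i) = ![x, y, z] i := by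
  simp [lift, gen]

lemma aeval_gen_injective : Function.Injective (aeval (R := k) (gen a 2)) := by
  intro p q hpq
  have h := isWeylTriple_polynomial a
  have hlift : ∀ q : k[X], lift h (aeval (gen a 2) q) 1 = q := fun q => by
    rw [← aeval_algHom_apply, lift_gen]
    change aeval (Algebra.lmul k k[X] X) q 1 = q
    rw [aeval_algHom_apply, aeval_X_left_apply]
    exact mul_one q
  rw [← hlift p, hpq, hlift q]

instance [Nontrivial k] : Nontrivial (GeneralizedWeylAlgebra a) :=
  aeval_gen_injective.nontrivial

end CommRing

section Field

variable {k : Type*} [Field k] {a : k[X]}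

lemma not_isSimpleRing_of_isWeylTriple {B : Type*} [Ring B] [Nontrivial B] [Algebra k B]
    [Module.Finite k B] {x y z : B} (h : IsWeylTriple a x y z) :
    ¬ IsSimpleRing (GeneralizedWeylAlgebra a) := by
  intro _
  let φ : k[X] →ₐ[k] B := (lift h).comp (aeval (gen a 2))
  have hφ : Function.Injective φ :=
    (RingHom.injective (lift h).toRingHom).comp aeval_gen_injective
  exact Polynomial.not_finite (Module.Finite.of_injective φ.toLinearMap hφ)

lemma not_isSimpleRing_of_not_isCoprime {d : ℕ} (hd : 1 ≤ d)
    (ha : ¬ IsCoprime a (taylor (d : k) a)) : ¬ IsSimpleRing (GeneralizedWeylAlgebra a) := by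
  obtain ⟨f, hf, hfa, hfd⟩ := exists_irreducible_dvd_of_not_isCoprime ha
  obtain ⟨n, rfl⟩ := Nat.exists_eq_add_of_le' hd
  have := Fact.mk hf
  have : Module.Finite k (AdjoinRoot f) := (AdjoinRoot.powerBasis hf.ne_zero).finite
  have h₀ : aeval (AdjoinRoot.root f) a = 0 := by
    rwa [AdjoinRoot.aeval_eq, AdjoinRoot.mk_eq_zero]
  have h₁ : aeval (AdjoinRoot.root f + (n + 1 : ℕ)) a = 0 := by
    rwa [← map_natCast (algebraMap k (AdjoinRoot f)), ← aeval_taylor, AdjoinRoot.aeval_eq,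
      AdjoinRoot.mk_eq_zero]
  obtain ⟨x, y, z, h⟩ := isWeylTriple_cyclic h₀ h₁
  exact not_isSimpleRing_of_isWeylTriple h

theorem isSimpleRing_iff [CharZero k] :
    IsSimpleRing (GeneralizedWeylAlgebra a) ↔
      ∀ d : ℕ, 1 ≤ d → IsCoprime a (taylor (d : k) a) :=
  ⟨fun h _ hd => by_contra fun ha => not_isSimpleRing_of_not_isCoprime hd ha h,
    (isWeylTriple_gen a).isSimpleRing (adjoin_gen_eq_top a)⟩

end Field

end GeneralizedWeylAlgebra

/-- The polynomial `z² - z/2 - s`, which is the value of `yx` in `T_{s,1}`. -/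
def quad {k : Type*} [Field k] (s : k) : k[X] :=
  X ^ 2 - C (1 / 2) * X - C s

section Quadratic

variable {k : Type*} [Field k]

lemma aeval_quad {B : Type*} [Ring B] [Algebra k B] (s : k) (z : B) :
    aeval z (quad s) = z * z - (1 / 2 : k) • z - s • 1 := by
  simp [quad, sq, Algebra.smul_def]

variable [CharZero k]

lemma taylor_quad (s d : k) :
    taylor d (quad s) = quad s + C (2 * d) * (X - C (1 / 4 - d / 2)) := by
  refine Polynomial.funext fun t => ?_
  simp only [quad, taylor_eval, eval_add, eval_sub, eval_mul, eval_pow, eval_X, eval_C]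
  ring

lemma aeval_add_one_quad {B : Type*} [Ring B] [Algebra k B] (s : k) (z : B) :
    aeval (z + 1) (quad s) = aeval z (quad s) + 2 * z + (1 / 2 : k) • 1 := by
  simp only [aeval_quad, add_mul, mul_add, one_mul, mul_one, two_mul, smul_add]
  module

lemma isCoprime_quad_taylor_iff {s d : k} (hd : d ≠ 0) :
    IsCoprime (quad s) (taylor d (quad s)) ↔ s ≠ (4 * d ^ 2 - 1) / 16 := by
  have hunit : IsUnit (C (2 * d)) := isUnit_C.2 (mul_ne_zero two_ne_zero hd).isUnit
  have hadd (p q : k[X]) : IsCoprime p (p + q) ↔ IsCoprime p q := by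
    simpa only [mul_one] using IsCoprime.mul_add_left_right_iff (x := p) (y := q) (z := 1)
  have heval : (quad s).eval (1 / 4 - d / 2) = (4 * d ^ 2 - 1) / 16 - s := by
    simp only [quad, eval_sub, eval_mul, eval_pow, eval_X, eval_C]
    ring
  rw [taylor_quad, hadd, isCoprime_mul_unit_left_right hunit, isCoprime_X_sub_C_iff, heval,
    sub_ne_zero, ne_comm]

end Quadratic

/-- Two sets of relations which are consequences of each other present the same algebra. -/
def ringQuotAlgEquiv {R A : Type*} [CommSemiring R] [Semiring A] [Algebra R A] {r r' : A → A → Prop}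
    (h : ∀ ⦃u v⦄, r u v → RingQuot.mkAlgHom R r' u = RingQuot.mkAlgHom R r' v)
    (h' : ∀ ⦃u v⦄, r' u v → RingQuot.mkAlgHom R r u = RingQuot.mkAlgHom R r v) :
    RingQuot r ≃ₐ[R] RingQuot r' :=
  AlgEquiv.ofAlgHom (RingQuot.liftAlgHom R ⟨RingQuot.mkAlgHom R r', h⟩)
    (RingQuot.liftAlgHom R ⟨RingQuot.mkAlgHom R r, h'⟩)
    (by ext; simp) (by ext; simp)

namespace TAlg

variable {s : ℂ}

lemma forall_tRel_iff {B : Type*} [Ring B] [Algebra ℂ B] {ψ : FreeAlgebra ℂ (Fin 3) →ₐ[ℂ] B} :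
    (∀ ⦃u v⦄, TRel s u v → ψ u = ψ v) ↔
      IsWeylTriple (quad s) (ψ (F3 0)) (ψ (F3 1)) (ψ (F3 2)) := by
  constructor
  · intro h
    have hyx : ψ (F3 1) * ψ (F3 0) = aeval (ψ (F3 2)) (quad s) := by
      simpa [aeval_quad] using h .rel_yx
    refine ⟨?_, ?_, hyx, ?_⟩
    · have hzx : ψ (F3 2) * ψ (F3 0) = ψ (F3 0) * ψ (F3 2) - ψ (F3 0) := by
        simpa using h .rel_zx
      rw [add_one_mul, hzx, sub_add_cancel]
    · simpa [sub_one_mul] using h .rel_yz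
    · rw [aeval_add_one_quad, ← hyx]
      simpa [map_ofNat ψ 2] using h .rel_xy
  · rintro h u v (_ | _ | _ | _)
    · simpa [h.y_mul_x, aeval_add_one_quad, map_ofNat ψ 2] using h.x_mul_y
    · simpa [sub_one_mul] using h.y_mul_z
    · simp [h.x_mul_z, add_one_mul]
    · simpa [aeval_quad] using h.y_mul_x

/-- The algebra `T_{s,1}` is the generalized Weyl algebra of `z² - z/2 - s`. -/
def algEquiv (s : ℂ) : TAlg s ≃ₐ[ℂ] GeneralizedWeylAlgebra (quad s) :=
  ringQuotAlgEquiv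
    (forall_tRel_iff.2 (GeneralizedWeylAlgebra.isWeylTriple_gen _))
    (GeneralizedWeylAlgebra.forall_rel_iff.2
      (forall_tRel_iff.1 fun _ _ h => RingQuot.mkAlgHom_rel ℂ h))

end TAlg

/-- `T_{σ,1}` is a simple ring if and only if
`σ ≠ (4d² − 1)/16` for every integer `d ≥ 1`. -/
theorem stmt10 (s : ℂ) :
    IsSimpleRing (TAlg s) ↔
      ∀ d : ℕ, 1 ≤ d → s ≠ (4 * (d : ℂ) ^ 2 - 1) / 16 := by
  have e : IsSimpleRing (TAlg s) ↔ IsSimpleRing (GeneralizedWeylAlgebra (quad s)) :=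
    ⟨.of_ringEquiv (TAlg.algEquiv s).toRingEquiv, .of_ringEquiv (TAlg.algEquiv s).symm.toRingEquiv⟩
  rw [e, GeneralizedWeylAlgebra.isSimpleRing_iff]
  exact forall₂_congr fun d hd => isCoprime_quad_taylor_iff (by exact_mod_cast (by omega : d ≠ 0))

end
end

section
/- Let d ≥ 1 be an integer, let σ = (4d² − 1)/16, and let T_{σ,1} be the ℂ-algebra generated by x, y, z subject to the relations xy = yx + 2z + 1/2, yz = zy − y, zx = xz − x and yx = z² − (1/2)z − σ. Then T_{σ,1} has, up to isomorphism, a unique finite-dimensional simple left module M, and dim_ℂ M = d. -/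
noncomputable section

/-!
Write `σ = (4c² − 1)/16` and substitute `z = u + 1/4 - c/2`. The relations become `[u, x] = -x`,
`[u, y] = y`, `yx = u(u - c)` and `xy = (u + 1)(u + 1 - c)`: `x` lowers and `y` raises the
eigenvalues of `u` by one. On a nonzero finite-dimensional module, a lowest eigenvector has
eigenvalue a root of `t(t - c)`, and the first power of `y` that kills it leads to another root,
larger by a positive integer. For `c = d` a natural number this forces the eigenvalues `0` and `d`,
so every such module has dimension at least `d`, and it receives a map from `ℂ[t]`, on which
`u = t∂`, that kills `t ^ d`. If the module is simple, the induced map from the `d`-dimensional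
module `ℂ[t] / (t ^ d)` is onto, hence an isomorphism.
-/

/-- A ladder triple with parameter `c`: a lowering element `x`, a raising element `y` and a counting
element `u`. These are the relations of `T_{σ,1}` for `σ = (4c² − 1)/16` in the coordinate
`u = z - (1/4 - c/2)`; see `TAlg.isLadderTriple` and `TAlg.lift`. -/
structure IsLadderTriple {R A : Type*} [CommRing R] [Ring A] [Algebra R A] (c : R) (x y u : A) :
    Prop where
  u_mul_x : u * x = x * u - x
  u_mul_y : u * y = y * u + y
  y_mul_x : y * x = u * (u - c • (1 : A))
  x_mul_y : x * y = (u + 1) * (u + 1 - c • (1 : A))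

theorem IsLadderTriple.map {R A B : Type*} [CommRing R] [Ring A] [Algebra R A] [Ring B]
    [Algebra R B] {c : R} {x y u : A} (h : IsLadderTriple c x y u) (f : A →ₐ[R] B) :
    IsLadderTriple c (f x) (f y) (f u) where
  u_mul_x := by rw [← map_mul, h.u_mul_x, map_sub, map_mul]
  u_mul_y := by rw [← map_mul, h.u_mul_y, map_add, map_mul]
  y_mul_x := by rw [← map_mul, h.y_mul_x, map_mul, map_sub, map_smul, map_one]
  x_mul_y := by
    rw [← map_mul, h.x_mul_y, map_mul, map_sub, map_add, map_smul, map_one]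

section Eigenvectors

open Module

theorem apply_pow_apply_eq_smul {R V : Type*} [CommRing R] [AddCommGroup V] [Module R V]
    {u a : End R V} {ε μ : R} (hua : u * a = a * u + ε • a) {v : V} (hv : u v = μ • v) (n : ℕ) :
    u ((a ^ n) v) = (μ + n * ε) • (a ^ n) v := by
  induction n with
  | zero => simpa using hv
  | succ n ih =>
    have hua' : u (a ((a ^ n) v)) = a (u ((a ^ n) v)) + ε • a ((a ^ n) v) :=
      LinearMap.congr_fun hua _
    rw [pow_succ', End.mul_apply, hua', ih, map_smul]
    push_cast
    module

variable {K V : Type*} [Field K] [CharZero K] [AddCommGroup V] [Module K V] [FiniteDimensional K V]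

theorem exists_pow_apply_ne_zero_and_pow_succ_apply_eq_zero {u a : End K V} {ε μ : K} (hε : ε ≠ 0)
    (hua : u * a = a * u + ε • a) {v : V} (hv : u v = μ • v) (hv0 : v ≠ 0) :
    ∃ n, (a ^ n) v ≠ 0 ∧ (a ^ (n + 1)) v = 0 := by
  by_contra! hstep
  have hne (n : ℕ) : (a ^ n) v ≠ 0 := Nat.rec (by simpa using hv0) hstep n
  have hli : LinearIndependent K fun n : ℕ => (a ^ n) v :=
    End.eigenvectors_linearIndependent' u (fun n : ℕ => μ + n * ε)
      (fun m n hmn => by simpa [hε] using hmn) _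
      fun n => ⟨End.mem_eigenspace_iff.2 (apply_pow_apply_eq_smul hua hv n), hne n⟩
  exact not_finite_iff_infinite.2 inferInstance hli.finite

end Eigenvectors

theorem eq_zero_and_add_one_eq_of_mul_sub_eq_zero {R : Type*} [CommRing R] [IsDomain R] [CharZero R]
    {μ : R} {d n : ℕ} (h : μ * (μ - d) = 0) (h' : (μ + n + 1) * (μ + n + 1 - d) = 0) :
    μ = 0 ∧ n + 1 = d := by
  have hcast : ((n + 1 : ℕ) : R) ≠ 0 := Nat.cast_ne_zero.2 n.succ_ne_zero
  have hcast' : ((d + n + 1 : ℕ) : R) ≠ 0 := Nat.cast_ne_zero.2 (d + n).succ_ne_zero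
  push_cast at hcast hcast'
  rcases mul_eq_zero.1 h with rfl | hμ
  · refine ⟨rfl, ?_⟩
    have hnd : (n : R) + 1 = d := by simpa [sub_eq_zero, hcast] using h'
    exact_mod_cast hnd
  · obtain rfl : μ = d := sub_eq_zero.1 hμ
    rcases mul_eq_zero.1 h' with h0 | h0
    · exact absurd h0 hcast'
    · exact absurd (by linear_combination h0) hcast

namespace IsLadderTriple

open Module

section Operators

variable {R V : Type*} [CommRing R] [AddCommGroup V] [Module R V] {c : R} {x y u : End R V}

theorem y_x_apply (h : IsLadderTriple c x y u) {v : V} {μ : R} (hv : u v = μ • v) :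
    y (x v) = (μ * (μ - c)) • v := by
  rw [← End.mul_apply, h.y_mul_x, End.mul_apply, LinearMap.sub_apply, LinearMap.smul_apply,
    End.one_apply, hv, ← sub_smul, map_smul, hv, smul_smul, mul_comm]

theorem x_y_apply (h : IsLadderTriple c x y u) {v : V} {μ : R} (hv : u v = μ • v) :
    x (y v) = ((μ + 1) * (μ + 1 - c)) • v := by
  have hv1 : (u + 1) v = (μ + 1) • v := by
    rw [LinearMap.add_apply, End.one_apply, hv, add_smul, one_smul]
  rw [← End.mul_apply, h.x_mul_y, End.mul_apply, LinearMap.sub_apply, LinearMap.smul_apply,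
    End.one_apply, hv1, ← sub_smul, map_smul, hv1, smul_smul, mul_comm]

theorem u_pow_y_apply (h : IsLadderTriple c x y u) {v : V} {μ : R} (hv : u v = μ • v) (n : ℕ) :
    u ((y ^ n) v) = (μ + n) • (y ^ n) v := by
  simpa using apply_pow_apply_eq_smul (ε := 1) (by rw [h.u_mul_y, one_smul]) hv n

theorem u_pow_y_apply_of_eq_zero (h : IsLadderTriple c x y u) {v : V} (hu : u v = 0)
    (n : ℕ) : u ((y ^ n) v) = (n : R) • (y ^ n) v := by
  simpa using h.u_pow_y_apply (μ := 0) (by simpa using hu) n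

theorem mapQ (h : IsLadderTriple c x y u) (P : Submodule R V) (hx : P ≤ P.comap x)
    (hy : P ≤ P.comap y) (hu : P ≤ P.comap u) :
    IsLadderTriple c (P.mapQ P x hx) (P.mapQ P y hy) (P.mapQ P u hu) where
  u_mul_x := P.linearMap_qext <| LinearMap.ext fun v =>
    congrArg P.mkQ (LinearMap.congr_fun h.u_mul_x v)
  u_mul_y := P.linearMap_qext <| LinearMap.ext fun v =>
    congrArg P.mkQ (LinearMap.congr_fun h.u_mul_y v)
  y_mul_x := P.linearMap_qext <| LinearMap.ext fun v =>
    congrArg P.mkQ (LinearMap.congr_fun h.y_mul_x v)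
  x_mul_y := P.linearMap_qext <| LinearMap.ext fun v =>
    congrArg P.mkQ (LinearMap.congr_fun h.x_mul_y v)

end Operators

section FiniteDimensional

variable {K V : Type*} [Field K] [IsAlgClosed K] [CharZero K] [AddCommGroup V] [Module K V]
  [FiniteDimensional K V] [Nontrivial V] {x y u : End K V}

theorem exists_eigenvector_x_apply_eq_zero {c : K} (h : IsLadderTriple c x y u) :
    ∃ v ≠ 0, ∃ μ : K, u v = μ • v ∧ x v = 0 := by
  obtain ⟨ν, hν⟩ := End.exists_eigenvalue u
  obtain ⟨w, hw⟩ := hν.exists_hasEigenvector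
  have hux : u * x = x * u + (-1 : K) • x := by rw [h.u_mul_x, neg_one_smul, sub_eq_add_neg]
  obtain ⟨n, hn, hn'⟩ := exists_pow_apply_ne_zero_and_pow_succ_apply_eq_zero
    (neg_ne_zero.2 one_ne_zero) hux hw.apply_eq_smul hw.2
  exact ⟨(x ^ n) w, hn, _, apply_pow_apply_eq_smul hux hw.apply_eq_smul n,
    by rwa [← End.mul_apply, ← pow_succ']⟩

theorem exists_lowest_vector {d : ℕ} (h : IsLadderTriple (d : K) x y u) :
    ∃ v ≠ 0, x v = 0 ∧ u v = 0 ∧ ∀ n, (y ^ n) v = 0 ↔ d ≤ n := by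
  obtain ⟨v, hv, μ, huv, hxv⟩ := h.exists_eigenvector_x_apply_eq_zero
  obtain ⟨N, hN, hN'⟩ := exists_pow_apply_ne_zero_and_pow_succ_apply_eq_zero
    one_ne_zero (by rw [h.u_mul_y, one_smul]) huv hv
  have hbottom : μ * (μ - d) = 0 := by
    have hyx := h.y_x_apply huv
    rw [hxv, map_zero] at hyx
    exact (smul_eq_zero.1 hyx.symm).resolve_right hv
  have htop : (μ + N + 1) * (μ + N + 1 - d) = 0 := by
    have hxy := h.x_y_apply (h.u_pow_y_apply huv N)
    rw [show y ((y ^ N) v) = 0 by rw [← End.mul_apply, ← pow_succ', hN'], map_zero] at hxy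
    exact (smul_eq_zero.1 hxy.symm).resolve_right hN
  obtain ⟨rfl, hd⟩ := eq_zero_and_add_one_eq_of_mul_sub_eq_zero hbottom htop
  refine ⟨v, hv, hxv, by rw [huv, zero_smul], fun n => ⟨fun hn => ?_, fun hn => ?_⟩⟩
  · by_contra! hlt
    exact hN (End.pow_map_zero_of_le (by omega) hn)
  · exact End.pow_map_zero_of_le (hd ▸ hn) hN'

theorem le_finrank {d : ℕ} (h : IsLadderTriple (d : K) x y u) : d ≤ finrank K V := by
  obtain ⟨v, -, -, huv, hyv⟩ := h.exists_lowest_vector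
  have hli : LinearIndependent K fun i : Fin d => (y ^ (i : ℕ)) v :=
    End.eigenvectors_linearIndependent' u (fun i : Fin d => ((i : ℕ) : K))
      (fun i j hij => by simpa [Fin.val_inj] using hij) _
      fun i => ⟨End.mem_eigenspace_iff.2 (h.u_pow_y_apply_of_eq_zero huv i), by simp [hyv]⟩
  simpa using hli.fintype_card_le_finrank

end FiniteDimensional

end IsLadderTriple

section Verma

open Polynomial

variable {R : Type*} [CommRing R]

/-- The lowering operator `t∂² + (1 - c)∂` of the Verma module `R[t]` with parameter `c`. -/
def vermaX (c : R) : Module.End R R[X] :=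
  LinearMap.mulLeft R X ∘ₗ derivative ∘ₗ derivative + (1 - c) • derivative

/-- The raising operator of the Verma module `R[t]`, multiplication by `t`. -/
def vermaY : Module.End R R[X] := LinearMap.mulLeft R X

/-- The counting operator of the Verma module `R[t]`, the Euler operator `t∂`. -/
def vermaU : Module.End R R[X] := LinearMap.mulLeft R X ∘ₗ derivative

theorem vermaX_apply (c : R) (p : R[X]) :
    vermaX c p = X * derivative (derivative p) + C (1 - c) * derivative p := by
  simp [vermaX, smul_eq_C_mul]

theorem vermaY_apply (p : R[X]) : vermaY p = X * p := rfl

theorem vermaU_apply (p : R[X]) : vermaU p = X * derivative p := rfl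

theorem isLadderTriple_verma (c : R) : IsLadderTriple c (vermaX c) vermaY vermaU := by
  constructor <;> refine LinearMap.ext fun p => ?_ <;>
    simp only [Module.End.mul_apply, LinearMap.add_apply, LinearMap.sub_apply,
      LinearMap.smul_apply, Module.End.one_apply, vermaX_apply, vermaY_apply, vermaU_apply,
      smul_eq_C_mul, derivative_mul, derivative_X, derivative_one, derivative_C,
      derivative_add, derivative_sub, C_sub, C_1] <;>
    ring

theorem vermaU_X_pow (n : ℕ) : vermaU (X ^ n : R[X]) = (n : R) • X ^ n := by
  cases n with
  | zero => simp [vermaU_apply]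
  | succ n =>
    rw [vermaU_apply, derivative_X_pow, Nat.add_sub_cancel, smul_eq_C_mul]
    ring

theorem vermaX_X_pow_succ (c : R) (n : ℕ) :
    vermaX c (X ^ (n + 1)) = ((n + 1) * (n + 1 - c)) • X ^ n := by
  rw [pow_succ', ← vermaY_apply, (isLadderTriple_verma c).x_y_apply (vermaU_X_pow n)]

theorem vermaX_X_pow_self (d : ℕ) : vermaX (d : R) (X ^ d) = 0 := by
  cases d with
  | zero => simp [vermaX_apply]
  | succ d => rw [vermaX_X_pow_succ, Nat.cast_succ, sub_self, mul_zero, zero_smul]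

theorem vermaU_mul (p q : R[X]) : vermaU (p * q) = vermaU p * q + p * vermaU q := by
  simp only [vermaU_apply, derivative_mul]
  ring

theorem vermaX_mul (c : R) (p q : R[X]) :
    vermaX c (p * q) = vermaX c p * q + p * vermaX c q + 2 * vermaU p * derivative q := by
  simp only [vermaX_apply, vermaU_apply, derivative_mul, derivative_add]
  ring

/-- The map `p ↦ p(y) v` from the Verma module determined by the image `v` of its generator. -/
def vermaMap {V : Type*} [AddCommGroup V] [Module R V] (y : Module.End R V) (v : V) :
    R[X] →ₗ[R] V :=
  LinearMap.applyₗ v ∘ₗ (aeval y).toLinearMap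

section VermaMap

variable {V : Type*} [AddCommGroup V] [Module R V] {c : R} {x y u : Module.End R V} {v : V}

theorem vermaMap_X_pow (n : ℕ) : vermaMap y v (X ^ n) = (y ^ n) v := by
  simp [vermaMap]

theorem vermaMap_comp_vermaY : vermaMap y v ∘ₗ vermaY = y ∘ₗ vermaMap y v := by
  refine LinearMap.ext fun p => ?_
  simp [vermaMap, vermaY_apply]

theorem IsLadderTriple.vermaMap_comp_vermaU (h : IsLadderTriple c x y u) (hu : u v = 0) :
    vermaMap y v ∘ₗ vermaU = u ∘ₗ vermaMap y v := by
  refine (basisMonomials R).ext fun n => ?_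
  simp only [coe_basisMonomials, monomial_one_right_eq_X_pow, LinearMap.comp_apply, vermaU_X_pow,
    map_smul, vermaMap_X_pow, h.u_pow_y_apply_of_eq_zero hu]

theorem IsLadderTriple.vermaMap_comp_vermaX (h : IsLadderTriple c x y u) (hx : x v = 0)
    (hu : u v = 0) : vermaMap y v ∘ₗ vermaX c = x ∘ₗ vermaMap y v := by
  refine (basisMonomials R).ext fun n => ?_
  simp only [coe_basisMonomials, monomial_one_right_eq_X_pow, LinearMap.comp_apply]
  cases n with
  | zero => simp [vermaX_apply, vermaMap, hx]
  | succ n =>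
    rw [vermaX_X_pow_succ, map_smul, vermaMap_X_pow, vermaMap_X_pow, pow_succ',
      Module.End.mul_apply, h.x_y_apply (h.u_pow_y_apply_of_eq_zero hu n)]

end VermaMap

/-- The multiples of `t ^ d` in `R[t]`, which form a submodule of the Verma module with parameter
`c = d`; the quotient is the simple module of dimension `d`. -/
def vermaSubmodule (R : Type*) [CommRing R] (d : ℕ) : Submodule R R[X] :=
  (Ideal.span {X ^ d}).restrictScalars R

theorem mem_vermaSubmodule {d : ℕ} {p : R[X]} : p ∈ vermaSubmodule R d ↔ X ^ d ∣ p :=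
  Ideal.mem_span_singleton

theorem vermaSubmodule_le_comap_vermaX (d : ℕ) :
    vermaSubmodule R d ≤ (vermaSubmodule R d).comap (vermaX (d : R)) := by
  intro p hp
  obtain ⟨q, rfl⟩ := mem_vermaSubmodule.1 hp
  refine mem_vermaSubmodule.2 ⟨vermaX (d : R) q + 2 * C (d : R) * derivative q, ?_⟩
  rw [vermaX_mul, vermaX_X_pow_self, vermaU_X_pow, smul_eq_C_mul]
  ring

theorem vermaSubmodule_le_comap_vermaY (d : ℕ) :
    vermaSubmodule R d ≤ (vermaSubmodule R d).comap vermaY := fun _ hp =>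
  mem_vermaSubmodule.2 ((mem_vermaSubmodule.1 hp).mul_left X)

theorem vermaSubmodule_le_comap_vermaU (d : ℕ) :
    vermaSubmodule R d ≤ (vermaSubmodule R d).comap vermaU := by
  intro p hp
  obtain ⟨q, rfl⟩ := mem_vermaSubmodule.1 hp
  refine mem_vermaSubmodule.2 ⟨C (d : R) * q + vermaU q, ?_⟩
  rw [vermaU_mul, vermaU_X_pow, smul_eq_C_mul]
  ring

instance finite_quotient_vermaSubmodule (d : ℕ) : Module.Finite R (R[X] ⧸ vermaSubmodule R d) :=
  (monic_X_pow d).finite_adjoinRoot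

theorem finrank_quotient_vermaSubmodule [Nontrivial R] (d : ℕ) :
    Module.finrank R (R[X] ⧸ vermaSubmodule R d) = d :=
  (finrank_quotient_span_eq_natDegree' (monic_X_pow d)).trans (natDegree_X_pow d)

theorem vermaSubmodule_le_ker_vermaMap {V : Type*} [AddCommGroup V] [Module R V]
    {y : Module.End R V} {v : V} {d : ℕ} (hv : (y ^ d) v = 0) :
    vermaSubmodule R d ≤ LinearMap.ker (vermaMap y v) := by
  intro p hp
  obtain ⟨q, rfl⟩ := mem_vermaSubmodule.1 hp
  rw [LinearMap.mem_ker, mul_comm]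
  simp [vermaMap, hv]

theorem isLadderTriple_vermaQuotient (d : ℕ) : IsLadderTriple (d : R)
    ((vermaSubmodule R d).mapQ _ (vermaX (d : R)) (vermaSubmodule_le_comap_vermaX d))
    ((vermaSubmodule R d).mapQ _ vermaY (vermaSubmodule_le_comap_vermaY d))
    ((vermaSubmodule R d).mapQ _ vermaU (vermaSubmodule_le_comap_vermaU d)) :=
  (isLadderTriple_verma (d : R)).mapQ ..

end Verma

/-- The parameter `σ` for which `z² - z/2 - σ` has the roots `1/4 - c/2` and `1/4 + c/2`, a distance
`c` apart. -/
abbrev sigma (c : ℂ) : ℂ := (4 * c ^ 2 - 1) / 16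

theorem IsLadderTriple.freeAlgebra_lift_eq {A : Type*} [Ring A] [Algebra ℂ A] {c : ℂ}
    {x y u : A} (h : IsLadderTriple c x y u) ⦃a b : FreeAlgebra ℂ (Fin 3)⦄
    (hab : TRel (sigma c) a b) :
    FreeAlgebra.lift ℂ ![x, y, u + (1 / 4 - c / 2) • 1] a =
      FreeAlgebra.lift ℂ ![x, y, u + (1 / 4 - c / 2) • 1] b := by
  induction hab <;>
    simp only [F3, map_mul, map_add, map_sub, map_smul, map_one, map_ofNat,
      FreeAlgebra.lift_ι_apply, Matrix.cons_val]
  case rel_xy =>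
    rw [h.x_mul_y, h.y_mul_x, two_mul]
    simp only [mul_sub, mul_add, add_mul, mul_smul_one, mul_one, one_mul]
    module
  case rel_yz =>
    rw [add_mul, mul_add, h.u_mul_y, smul_one_mul, mul_smul_one]
    abel
  case rel_zx =>
    rw [add_mul, mul_add, h.u_mul_x, smul_one_mul, mul_smul_one]
    abel
  case rel_yx =>
    simp only [h.y_mul_x, mul_sub, mul_add, add_mul, smul_one_mul, mul_smul_one]
    module

namespace TAlg

/-- The generator `x` of `T_{σ,1}`. -/
def x (s : ℂ) : TAlg s := RingQuot.mkAlgHom ℂ (TRel s) (F3 0)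

/-- The generator `y` of `T_{σ,1}`. -/
def y (s : ℂ) : TAlg s := RingQuot.mkAlgHom ℂ (TRel s) (F3 1)

/-- The generator `z` of `T_{σ,1}`. -/
def z (s : ℂ) : TAlg s := RingQuot.mkAlgHom ℂ (TRel s) (F3 2)

/-- The shifted generator `u = z - (1/4 - c/2)` of `T_{σ,1}`, for `σ = (4c² - 1)/16`. -/
def u (c : ℂ) : TAlg (sigma c) := z _ - (1 / 4 - c / 2) • 1

theorem z_eq_u_add (c : ℂ) : z (sigma c) = u c + (1 / 4 - c / 2) • 1 :=
  (sub_add_cancel _ _).symm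

theorem x_mul_y (s : ℂ) : x s * y s = y s * x s + (2 : ℂ) • z s + (1 / 2 : ℂ) • 1 := by
  simpa [x, y, z, two_mul, two_smul] using RingQuot.mkAlgHom_rel ℂ (TRel.rel_xy (s := s))

theorem y_mul_z (s : ℂ) : y s * z s = z s * y s - y s := by
  simpa [y, z] using RingQuot.mkAlgHom_rel ℂ (TRel.rel_yz (s := s))

theorem z_mul_x (s : ℂ) : z s * x s = x s * z s - x s := by
  simpa [x, z] using RingQuot.mkAlgHom_rel ℂ (TRel.rel_zx (s := s))

theorem y_mul_x (s : ℂ) : y s * x s = z s * z s - (1 / 2 : ℂ) • z s - s • 1 := by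
  simpa [x, y, z] using RingQuot.mkAlgHom_rel ℂ (TRel.rel_yx (s := s))

theorem isLadderTriple (c : ℂ) : IsLadderTriple c (x (sigma c)) (y (sigma c)) (u c) where
  u_mul_x := by
    rw [u, sub_mul, mul_sub, z_mul_x, smul_one_mul, mul_smul_one]
    abel
  u_mul_y := by
    rw [u, sub_mul, mul_sub, y_mul_z, smul_one_mul, mul_smul_one]
    abel
  y_mul_x := by
    simp only [y_mul_x, u, mul_sub, sub_mul, smul_one_mul, mul_smul_one]
    module
  x_mul_y := by
    simp only [x_mul_y, y_mul_x, u, mul_sub, sub_mul, mul_add, add_mul, mul_smul_comm,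
      smul_mul_assoc, mul_one, one_mul]
    module

theorem induction {s : ℂ} {motive : TAlg s → Prop}
    (algebraMap : ∀ r, motive (algebraMap ℂ _ r)) (x : motive (x s)) (y : motive (y s))
    (z : motive (z s)) (mul : ∀ a b, motive a → motive b → motive (a * b))
    (add : ∀ a b, motive a → motive b → motive (a + b)) (a : TAlg s) : motive a := by
  obtain ⟨p, rfl⟩ := RingQuot.mkAlgHom_surjective ℂ (TRel s) a
  induction p using FreeAlgebra.induction with
  | grade0 r => simpa using algebraMap r
  | grade1 i =>
    fin_cases i
    exacts [x, y, z]
  | mul p q hp hq => simpa using mul _ _ hp hq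
  | add p q hp hq => simpa using add _ _ hp hq

/-- The homomorphism out of `T_{σ,1}`, for `σ = (4c² - 1)/16`, determined by a ladder triple. -/
def lift {A : Type*} [Ring A] [Algebra ℂ A] {c : ℂ} {x y u : A} (h : IsLadderTriple c x y u) :
    TAlg (sigma c) →ₐ[ℂ] A :=
  RingQuot.liftAlgHom ℂ
    ⟨FreeAlgebra.lift ℂ ![x, y, u + (1 / 4 - c / 2) • 1], h.freeAlgebra_lift_eq⟩

section Lift

variable {A : Type*} [Ring A] [Algebra ℂ A] {c : ℂ} {x y u : A} (h : IsLadderTriple c x y u)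

theorem lift_x : lift h (TAlg.x _) = x := by
  simp [lift, TAlg.x, F3]

theorem lift_y : lift h (TAlg.y _) = y := by
  simp [lift, TAlg.y, F3]

theorem lift_u : lift h (TAlg.u c) = u := by
  simp [lift, TAlg.u, TAlg.z, F3]

end Lift

theorem map_apply_eq_apply_map {V W : Type*} [AddCommGroup V] [Module ℂ V]
    [AddCommGroup W] [Module ℂ W] {c : ℂ}
    {ρ : TAlg (sigma c) →ₐ[ℂ] Module.End ℂ V} {π : TAlg (sigma c) →ₐ[ℂ] Module.End ℂ W}
    {f : V →ₗ[ℂ] W} (hx : f ∘ₗ ρ (x _) = π (x _) ∘ₗ f) (hy : f ∘ₗ ρ (y _) = π (y _) ∘ₗ f)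
    (hu : f ∘ₗ ρ (u c) = π (u c) ∘ₗ f) (a : TAlg (sigma c)) (v : V) : f (ρ a v) = π a (f v) := by
  induction a using TAlg.induction generalizing v with
  | algebraMap r => simp [Module.algebraMap_end_apply]
  | x => exact LinearMap.congr_fun hx v
  | y => exact LinearMap.congr_fun hy v
  | z => simpa [z_eq_u_add, Module.algebraMap_end_apply] using LinearMap.congr_fun hu v
  | mul a b ha hb => simp [ha, hb]
  | add a b ha hb => simp [ha, hb]

end TAlg

/-- The representation of `T_{σ,1}` on `ℂ[t] / (t ^ d)`, for `σ = (4d² - 1)/16`. -/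
def vermaQuotientRep (d : ℕ) :
    TAlg (sigma d) →ₐ[ℂ] Module.End ℂ (Polynomial ℂ ⧸ vermaSubmodule ℂ d) :=
  TAlg.lift (isLadderTriple_vermaQuotient d)

theorem SimpleRep.surjective_of_intertwines {R V : Type*} [Ring R] [Algebra ℂ R]
    [AddCommGroup V] [Module ℂ V] {d : ℕ} {ρ : R →ₐ[ℂ] Module.End ℂ (Fin d → ℂ)}
    (hρ : SimpleRep R d ρ)
    {π : R →ₐ[ℂ] Module.End ℂ V} {f : V →ₗ[ℂ] Fin d → ℂ} (hf : ∀ a v, f (π a v) = ρ a (f v))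
    (hf0 : f ≠ 0) : Function.Surjective f := by
  refine LinearMap.range_eq_top.1 ((hρ.2 (LinearMap.range f) ?_).resolve_left
    (mt LinearMap.range_eq_bot.1 hf0))
  rintro a _ ⟨v, rfl⟩
  exact ⟨π a v, hf a v⟩

theorem simpleRep_of_pos {d : ℕ} (hd : 0 < d)
    (ρ : TAlg (sigma d) →ₐ[ℂ] Module.End ℂ (Fin d → ℂ)) : SimpleRep (TAlg (sigma d)) d ρ := by
  have : Nonempty (Fin d) := ⟨⟨0, hd⟩⟩
  refine ⟨exists_ne 0, fun P hP => or_iff_not_imp_right.2 fun hne => ?_⟩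
  have : Nontrivial ((Fin d → ℂ) ⧸ P) := Submodule.Quotient.nontrivial_iff.2 hne
  have hle : d ≤ Module.finrank ℂ ((Fin d → ℂ) ⧸ P) :=
    (((TAlg.isLadderTriple d).map ρ).mapQ P (hP _) (hP _) (hP _)).le_finrank
  have hadd := P.finrank_quotient_add_finrank
  rw [Module.finrank_fin_fun] at hadd
  exact Submodule.finrank_eq_zero.1 (by omega)

theorem SimpleRep.exists_vermaQuotient_equiv {d n : ℕ}
    {ρ : TAlg (sigma d) →ₐ[ℂ] Module.End ℂ (Fin n → ℂ)} (hρ : SimpleRep (TAlg (sigma d)) n ρ) :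
    ∃ e : (Polynomial ℂ ⧸ vermaSubmodule ℂ d) ≃ₗ[ℂ] (Fin n → ℂ),
      ∀ a p, e (vermaQuotientRep d a p) = ρ a (e p) := by
  obtain ⟨w, hw⟩ := hρ.1
  have : Nontrivial (Fin n → ℂ) := ⟨w, 0, hw⟩
  have h := (TAlg.isLadderTriple d).map ρ
  obtain ⟨v, hv, hxv, huv, hyv⟩ := h.exists_lowest_vector
  let f := (vermaSubmodule ℂ d).liftQ _ (vermaSubmodule_le_ker_vermaMap ((hyv d).2 le_rfl))
  have hf : ∀ a p, f (vermaQuotientRep d a p) = ρ a (f p) := TAlg.map_apply_eq_apply_map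
    (by
      rw [vermaQuotientRep, TAlg.lift_x]
      exact Submodule.linearMap_qext _ (h.vermaMap_comp_vermaX hxv huv))
    (by
      rw [vermaQuotientRep, TAlg.lift_y]
      exact Submodule.linearMap_qext _ vermaMap_comp_vermaY)
    (by
      rw [vermaQuotientRep, TAlg.lift_u]
      exact Submodule.linearMap_qext _ (h.vermaMap_comp_vermaU huv))
  have hf1 : f (Submodule.Quotient.mk 1) = v := by simp [f, vermaMap]
  have hsurj : Function.Surjective f :=
    hρ.surjective_of_intertwines hf fun hf0 => hv (by rw [← hf1, hf0]; rfl)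
  have hfinrank : Module.finrank ℂ (Polynomial ℂ ⧸ vermaSubmodule ℂ d) =
      Module.finrank ℂ (Fin n → ℂ) :=
    le_antisymm ((finrank_quotient_vermaSubmodule d).trans_le h.le_finrank)
      (LinearMap.finrank_le_finrank_of_surjective hsurj)
  exact ⟨.ofBijective f
    ⟨(LinearMap.injective_iff_surjective_of_finrank_eq_finrank hfinrank).2 hsurj, hsurj⟩, hf⟩

/-- For `σ = (4d² − 1)/16` with `d ≥ 1`, the algebra `T_{σ,1}` has,
up to isomorphism, a unique finite-dimensional simple module, and its dimension is `d`. -/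
theorem stmt11 (d : ℕ) (hd : 1 ≤ d) :
    let s : ℂ := (4 * (d : ℂ) ^ 2 - 1) / 16
    (∃ ρ : TAlg s →ₐ[ℂ] Module.End ℂ (Fin d → ℂ), SimpleRep (TAlg s) d ρ) ∧
    (∀ (d' : ℕ) (ρ' : TAlg s →ₐ[ℂ] Module.End ℂ (Fin d' → ℂ)),
      SimpleRep (TAlg s) d' ρ' → d' = d) ∧
    (∀ ρ₁ ρ₂ : TAlg s →ₐ[ℂ] Module.End ℂ (Fin d → ℂ),
      SimpleRep (TAlg s) d ρ₁ → SimpleRep (TAlg s) d ρ₂ →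
      ∃ e : (Fin d → ℂ) ≃ₗ[ℂ] (Fin d → ℂ),
        ∀ (a : TAlg s) (v : Fin d → ℂ), e (ρ₁ a v) = ρ₂ a (e v)) := by
  intro s
  refine ⟨?_, fun n ρ hρ => ?_, fun ρ₁ ρ₂ h₁ h₂ => ?_⟩
  · let e : (Polynomial ℂ ⧸ vermaSubmodule ℂ d) ≃ₗ[ℂ] (Fin d → ℂ) :=
      .ofFinrankEq _ _ (by rw [finrank_quotient_vermaSubmodule, Module.finrank_fin_fun])
    exact ⟨(e.conjAlgEquiv ℂ).toAlgHom.comp (vermaQuotientRep d), simpleRep_of_pos hd _⟩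
  · obtain ⟨e, -⟩ := hρ.exists_vermaQuotient_equiv
    simpa [finrank_quotient_vermaSubmodule] using e.finrank_eq.symm
  · obtain ⟨e₁, he₁⟩ := h₁.exists_vermaQuotient_equiv
    obtain ⟨e₂, he₂⟩ := h₂.exists_vermaQuotient_equiv
    refine ⟨e₁.symm.trans e₂, fun a v => ?_⟩
    obtain ⟨p, rfl⟩ := e₁.surjective v
    simp [← he₁, he₂]

end
end
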